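/- arXiv:1612.09358 — 3 statements merged into one kernel-verified Lean document; each statement's English description precedes it below -/
import Mathlib

section
/- Let (y11, y12) and (y21, y22) be two solutions of the Berger boundary value problem with the same initial value y12(0) = y22(0), and suppose phi0 := exp(y12(0)) satisfies phi0 ≠ 1 and 1/4 < phi0 < 4. If moreover y11(0) = y21(0) (i.e. the two solutions have the same value K(0)), then (y11, y12) = (y21, y22) on all of [0,1]. -/
open Real Set

/-- Equation (E1) of the Berger Einstein ODE system:
`y1'' + (1/6)(y1')² + (1/3)(y2')² − x⁻¹(1+3x²)(1−x²)⁻¹ y1' = 0`. -/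
noncomputable def BergerE1 (y1 y2 : ℝ → ℝ) (x : ℝ) : ℝ :=
  deriv (deriv y1) x + (1/6) * (deriv y1 x)^2 + (1/3) * (deriv y2 x)^2
    - x⁻¹ * (1 + 3*x^2) * (1 - x^2)⁻¹ * deriv y1 x

/-- Equation (E2) of the Berger Einstein ODE system, with `K = exp ∘ y1`, `phi = exp ∘ y2`:
`y1'' + (1/2)(y1')² − x⁻¹(5+7x²)(1−x²)⁻¹ y1'
  + 8(1−x²)⁻²(6 − 8 K^{-1/3} phi^{-1/3} + 2 K^{-1/3} phi^{-4/3}) = 0`. -/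
noncomputable def BergerE2 (y1 y2 : ℝ → ℝ) (x : ℝ) : ℝ :=
  deriv (deriv y1) x + (1/2) * (deriv y1 x)^2
    - x⁻¹ * (5 + 7*x^2) * (1 - x^2)⁻¹ * deriv y1 x
    + 8 * ((1 - x^2)⁻¹)^2 *
      (6 - 8 * Real.exp (y1 x) ^ (-(1:ℝ)/3) * Real.exp (y2 x) ^ (-(1:ℝ)/3)
         + 2 * Real.exp (y1 x) ^ (-(1:ℝ)/3) * Real.exp (y2 x) ^ (-(4:ℝ)/3))

/-- Equation (E3) of the Berger Einstein ODE system, with `K = exp ∘ y1`, `phi = exp ∘ y2`: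
`y2'' + (1/2) y1' y2' − 2x⁻¹(1+2x²)(1−x²)⁻¹ y2'
  + 32(1−x²)⁻² K^{-1/3} phi^{-1/3}(phi⁻¹ − 1) = 0`. -/
noncomputable def BergerE3 (y1 y2 : ℝ → ℝ) (x : ℝ) : ℝ :=
  deriv (deriv y2) x + (1/2) * deriv y1 x * deriv y2 x
    - 2 * x⁻¹ * (1 + 2*x^2) * (1 - x^2)⁻¹ * deriv y2 x
    + 32 * ((1 - x^2)⁻¹)^2 * Real.exp (y1 x) ^ (-(1:ℝ)/3) * Real.exp (y2 x) ^ (-(1:ℝ)/3)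
      * ((Real.exp (y2 x))⁻¹ - 1)

/-- A solution of the Berger boundary value problem: a pair `(y1, y2)` smooth on `[0,1]`
(realized as globally smooth functions), real analytic on `(0,1]`, satisfying (E1)–(E3)
on `(0,1)`, with boundary conditions `K(1) = phi(1) = 1` (where `K = exp ∘ y1`,
`phi = exp ∘ y2`) and `y1'(0) = y2'(0) = y1'(1) = y2'(1) = 0`. -/
structure BergerBVPSolution (y1 y2 : ℝ → ℝ) : Prop where
  smooth1 : ContDiff ℝ (⊤ : ℕ∞) y1
  smooth2 : ContDiff ℝ (⊤ : ℕ∞) y2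
  analytic1 : AnalyticOnNhd ℝ y1 (Ioc 0 1)
  analytic2 : AnalyticOnNhd ℝ y2 (Ioc 0 1)
  eqE1 : ∀ x ∈ Ioo (0:ℝ) 1, BergerE1 y1 y2 x = 0
  eqE2 : ∀ x ∈ Ioo (0:ℝ) 1, BergerE2 y1 y2 x = 0
  eqE3 : ∀ x ∈ Ioo (0:ℝ) 1, BergerE3 y1 y2 x = 0
  bdryK : Real.exp (y1 1) = 1
  bdryPhi : Real.exp (y2 1) = 1
  der1_0 : deriv y1 0 = 0
  der2_0 : deriv y2 0 = 0
  der1_1 : deriv y1 1 = 0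
  der2_1 : deriv y2 1 = 0

open Filter Topology

/-- A function that tends to `0` at `0⁺` and whose derivative is bounded by `B` on `(0, x]` is
bounded by `B * x` at `x`. -/
theorem abs_le_mul_of_tendsto_zero {f f' : ℝ → ℝ} {x B : ℝ} (hx : 0 < x)
    (hf : ∀ t ∈ Ioc 0 x, HasDerivAt f (f' t) t) (hB : ∀ t ∈ Ioc 0 x, |f' t| ≤ B)
    (h0 : Tendsto f (𝓝[>] 0) (𝓝 0)) : |f x| ≤ B * x := by
  have hB0 : 0 ≤ B := (abs_nonneg _).trans (hB x ⟨hx, le_rfl⟩)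
  have key : ∀ᶠ s in 𝓝[>] (0 : ℝ), |f x - f s| ≤ B * x := by
    filter_upwards [Ioc_mem_nhdsGT hx] with s hs
    have hsub : ∀ t ∈ Icc s x, t ∈ Ioc 0 x := fun t ht => ⟨hs.1.trans_le ht.1, ht.2⟩
    have := Convex.norm_image_sub_le_of_norm_hasDerivWithin_le
      (fun t ht => (hf t (hsub t ht)).hasDerivWithinAt (s := Icc s x))
      (fun t ht => hB t (hsub t ht)) (convex_Icc s x)
      (left_mem_Icc.2 hs.2) (right_mem_Icc.2 hs.2)
    simp only [Real.norm_eq_abs] at this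
    rw [abs_of_nonneg (sub_nonneg.2 hs.2)] at this
    nlinarith [hs.1]
  have hlim : Tendsto (fun s => |f x - f s|) (𝓝[>] 0) (𝓝 |f x - 0|) :=
    (tendsto_const_nhds.sub h0).abs
  rw [sub_zero] at hlim
  exact le_of_tendsto hlim key

/-- A Gronwall-type uniqueness principle at the singular endpoint `0` for the linearised system
satisfied by the difference of two solutions and the associated fluxes. -/
theorem singular_gronwall {z₁ z₂ z₁' z₂' U W U' W' : ℝ → ℝ} {b C : ℝ} (hb : 0 < b) (hC : 0 ≤ C)
    (dz₁ : ∀ x ∈ Ioo 0 b, HasDerivAt z₁ (z₁' x) x) (dz₂ : ∀ x ∈ Ioo 0 b, HasDerivAt z₂ (z₂' x) x)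
    (dU : ∀ x ∈ Ioo 0 b, HasDerivAt U (U' x) x) (dW : ∀ x ∈ Ioo 0 b, HasDerivAt W (W' x) x)
    (lz₁ : Tendsto z₁ (𝓝[>] 0) (𝓝 0)) (lz₂ : Tendsto z₂ (𝓝[>] 0) (𝓝 0))
    (lU : Tendsto U (𝓝[>] 0) (𝓝 0)) (lW : Tendsto W (𝓝[>] 0) (𝓝 0))
    (h₁ : ∀ x ∈ Ioo 0 b, |z₁' x| ≤ C * (x * |U x|))
    (h₂ : ∀ x ∈ Ioo 0 b, |z₂' x| ≤ C * (x ^ 2 * |W x| + x * |z₁ x|))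
    (hU : ∀ x ∈ Ioo 0 b, |U' x| ≤ C * |z₂' x|)
    (hW : ∀ x ∈ Ioo 0 b, x ^ 2 * |W' x| ≤ C * (|z₁ x| + |z₂ x|)) :
    ∃ δ > 0, ∀ x ∈ Ioo 0 δ, z₁ x = 0 ∧ z₂ x = 0 := by
  set A : ℝ := C * (C * (2 + C)) with hA
  have hA0 : 0 ≤ A := by positivity
  have hU1 : ∀ᶠ x in 𝓝[>] (0 : ℝ), |U x| < 1 := by
    simpa using lU.abs.eventually (gt_mem_nhds (by simp : |(0 : ℝ)| < 1))
  have hW1 : ∀ᶠ x in 𝓝[>] (0 : ℝ), |W x| < 1 := by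
    simpa using lW.abs.eventually (gt_mem_nhds (by simp : |(0 : ℝ)| < 1))
  obtain ⟨ε, hε, hε'⟩ := mem_nhdsGT_iff_exists_Ioo_subset.1 (hU1.and hW1)
  have hε0 : (0 : ℝ) < ε := hε
  set δ : ℝ := min (min ε b) (min 1 (1 / (2 * (A + 1)))) with hδ
  have hδ0 : 0 < δ := by positivity
  have hδε : δ ≤ ε := (min_le_left _ _).trans (min_le_left _ _)
  have hδb : δ ≤ b := (min_le_left _ _).trans (min_le_right _ _)
  have hδ1 : δ ≤ 1 := (min_le_right _ _).trans (min_le_left _ _)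
  have hδA : A * δ ≤ 1 / 2 := by
    have h : δ ≤ 1 / (2 * (A + 1)) := (min_le_right _ _).trans (min_le_right _ _)
    rw [le_div_iff₀ (by positivity)] at h
    nlinarith
  have step : ∀ M : ℝ, 0 ≤ M → (∀ x ∈ Ioo 0 δ, |U x| ≤ M ∧ |W x| ≤ M) → ∀ x ∈ Ioo 0 δ,
      (|z₁ x| ≤ C * M ∧ |z₂ x| ≤ C * (1 + C) * M) ∧ |U x| ≤ M / 2 ∧ |W x| ≤ M / 2 := by
    intro M hM hUW
    have e₁ : ∀ x ∈ Ioo 0 δ, |z₁ x| ≤ C * M * x ^ 2 := by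
      intro x hx
      have := abs_le_mul_of_tendsto_zero (B := C * (x * M)) hx.1
        (fun t ht => dz₁ t ⟨ht.1, by linarith [ht.2, hx.2]⟩)
        (fun t ht => (h₁ t ⟨ht.1, by linarith [ht.2, hx.2]⟩).trans (by
          have := (hUW t ⟨ht.1, by linarith [ht.2, hx.2]⟩).1
          have := ht.1
          have := hx.1
          gcongr
          exact ht.2)) lz₁
      linarith
    have e₂' : ∀ x ∈ Ioo 0 δ, |z₂' x| ≤ C * (1 + C) * M * x ^ 2 := by
      intro x hx
      have h0 := hx.1
      calc |z₂' x| ≤ C * (x ^ 2 * |W x| + x * |z₁ x|) := h₂ x ⟨hx.1, by linarith [hx.2]⟩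
        _ ≤ C * (x ^ 2 * M + 1 * (C * M * x ^ 2)) := by
          have := (hUW x hx).2
          have := e₁ x hx
          have : x ≤ 1 := by linarith [hx.2]
          gcongr
        _ = _ := by ring
    have e₂'' : ∀ x ∈ Ioo 0 δ, ∀ t ∈ Ioc 0 x, |z₂' t| ≤ C * (1 + C) * M * x ^ 2 := by
      intro x hx t ht
      refine (e₂' t ⟨ht.1, by linarith [ht.2, hx.2]⟩).trans ?_
      have := ht.1.le
      gcongr
      exact ht.2
    have e₂ : ∀ x ∈ Ioo 0 δ, |z₂ x| ≤ C * (1 + C) * M * x ^ 2 * x := by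
      intro x hx
      exact abs_le_mul_of_tendsto_zero hx.1
        (fun t ht => dz₂ t ⟨ht.1, by linarith [ht.2, hx.2]⟩) (e₂'' x hx) lz₂
    have sq1 : ∀ x ∈ Ioo 0 δ, x ^ 2 ≤ 1 := fun x hx => by
      have : x ≤ 1 := by linarith [hx.2]
      nlinarith [hx.1]
    have half : ∀ x ∈ Ioo 0 δ, A * M * x ≤ M / 2 := fun x hx => by
      have : A * x ≤ 1 / 2 := (mul_le_mul_of_nonneg_left hx.2.le hA0).trans hδA
      nlinarith
    intro x hx
    have hx1 : x ≤ 1 := by linarith [hx.2]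
    have hx0 := hx.1
    refine ⟨⟨?_, ?_⟩, ?_, ?_⟩
    · refine (e₁ x hx).trans ?_
      exact mul_le_of_le_one_right (by positivity) (sq1 x hx)
    · refine (e₂ x hx).trans ?_
      rw [mul_assoc]
      exact mul_le_of_le_one_right (by positivity) (mul_le_one₀ (sq1 x hx) hx0.le hx1)
    · refine le_trans ?_ (half x hx)
      refine abs_le_mul_of_tendsto_zero hx.1
        (fun t ht => dU t ⟨ht.1, by linarith [ht.2, hx.2]⟩) (fun t ht => ?_) lU
      calc |U' t| ≤ C * |z₂' t| := hU t ⟨ht.1, by linarith [ht.2, hx.2]⟩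
        _ ≤ C * (C * (1 + C) * M * x ^ 2) := by gcongr; exact e₂'' x hx t ht
        _ ≤ C * (C * (1 + C) * M * 1) := by gcongr; exact sq1 x hx
        _ ≤ A * M := by rw [hA]; nlinarith [mul_nonneg (mul_nonneg hC hC) hM]
    · refine le_trans ?_ (half x hx)
      refine abs_le_mul_of_tendsto_zero hx.1
        (fun t ht => dW t ⟨ht.1, by linarith [ht.2, hx.2]⟩) (fun t ht => ?_) lW
      have htδ : t ∈ Ioo 0 δ := ⟨ht.1, by linarith [ht.2, hx.2]⟩
      have ht2 : 0 < t ^ 2 := by have := ht.1; positivity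
      refine le_of_mul_le_mul_left ?_ ht2
      calc t ^ 2 * |W' t| ≤ C * (|z₁ t| + |z₂ t|) := hW t ⟨ht.1, by linarith [ht.2, hx.2]⟩
        _ ≤ C * (C * M * t ^ 2 + C * (1 + C) * M * t ^ 2 * 1) := by
          have := e₁ t htδ
          have := e₂ t htδ
          have : t ≤ 1 := by linarith [htδ.2]
          have : C * (1 + C) * M * t ^ 2 * t ≤ C * (1 + C) * M * t ^ 2 * 1 := by gcongr
          gcongr
          linarith
        _ = t ^ 2 * (A * M) := by rw [hA]; ring
  have iter : ∀ n : ℕ, ∀ x ∈ Ioo 0 δ, |U x| ≤ (1 / 2) ^ n ∧ |W x| ≤ (1 / 2) ^ n := by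
    intro n
    induction n with
    | zero =>
      intro x hx
      have := hε' ⟨hx.1, hx.2.trans_le hδε⟩
      simpa using ⟨this.1.le, this.2.le⟩
    | succ n ih =>
      intro x hx
      have := (step _ (by positivity) ih x hx).2
      rw [pow_succ]
      constructor <;> linarith [this.1, this.2]
  have lim : ∀ c : ℝ, Tendsto (fun n : ℕ => c * (1 / 2 : ℝ) ^ n) atTop (𝓝 0) := fun c => by
    simpa using (tendsto_pow_atTop_nhds_zero_of_lt_one (r := (1 / 2 : ℝ))
      (by norm_num) (by norm_num)).const_mul c
  refine ⟨δ, hδ0, fun x hx => ⟨?_, ?_⟩⟩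
  · exact abs_nonpos_iff.1 (ge_of_tendsto' (lim C) fun n =>
      (step _ (by positivity) (iter n) x hx).1.1)
  · exact abs_nonpos_iff.1 (ge_of_tendsto' (lim (C * (1 + C))) fun n =>
      (step _ (by positivity) (iter n) x hx).1.2)

/-- The equations (E1) and (E3) for `y = log K` and `w = ± log phi`, with the zeroth order
nonlinearity of (E3) replaced by a general function `G`. -/
structure ReducedBergerSolution (G y w : ℝ → ℝ) : Prop where
  smooth_y : ContDiff ℝ (⊤ : ℕ∞) y
  smooth_w : ContDiff ℝ (⊤ : ℕ∞) w
  eq_y : ∀ x ∈ Ioo (0 : ℝ) 1, deriv (deriv y) x =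
    x⁻¹ * (1 + 3 * x ^ 2) * (1 - x ^ 2)⁻¹ * deriv y x
      - (1 / 6) * deriv y x ^ 2 - (1 / 3) * deriv w x ^ 2
  eq_w : ∀ x ∈ Ioo (0 : ℝ) 1, deriv (deriv w) x =
    2 * x⁻¹ * (1 + 2 * x ^ 2) * (1 - x ^ 2)⁻¹ * deriv w x - (1 / 2) * deriv y x * deriv w x
      + 32 * ((1 - x ^ 2)⁻¹) ^ 2 * Real.exp (-(y x) / 3) * G (w x)
  deriv_y_zero : deriv y 0 = 0
  deriv_w_zero : deriv w 0 = 0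
  w_one : w 1 = 0

/-- The flux `x⁻² (1 - x²)³ K^{1/2} w'` attached to the divergence form of (E3). -/
noncomputable def bergerFlux (y w : ℝ → ℝ) (x : ℝ) : ℝ :=
  (x ^ 2)⁻¹ * (1 - x ^ 2) ^ 3 * Real.exp (y x / 2) * deriv w x

/-- The flux of the difference of two solutions of (E1). -/
noncomputable def bergerDiffFlux (ya yb : ℝ → ℝ) (x : ℝ) : ℝ :=
  x⁻¹ * (1 - x ^ 2) ^ 2 * Real.exp ((ya x + yb x) / 6) * (deriv ya x - deriv yb x)

theorem contDiff_deriv_of_smooth {f : ℝ → ℝ} (hf : ContDiff ℝ (⊤ : ℕ∞) f) :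
    ContDiff ℝ (⊤ : ℕ∞) (deriv f) :=
  (contDiff_infty_iff_deriv.1 hf).2

theorem hasDerivAt_of_smooth {f : ℝ → ℝ} (hf : ContDiff ℝ (⊤ : ℕ∞) f) (x : ℝ) :
    HasDerivAt f (deriv f x) x :=
  ((contDiff_infty_iff_deriv.1 hf).1 x).hasDerivAt

/-- The difference quotient at `0` of a smooth function vanishing at `0`. -/
theorem tendsto_div_self_of_smooth {f : ℝ → ℝ} (hf : ContDiff ℝ (⊤ : ℕ∞) f) (h0 : f 0 = 0) :
    Tendsto (fun x => f x / x) (𝓝[>] 0) (𝓝 (deriv f 0)) := by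
  have := hasDerivAt_iff_tendsto_slope_zero.1 (hasDerivAt_of_smooth hf 0)
  have := this.mono_left (nhdsWithin_mono 0 (s := Ioi (0 : ℝ)) fun x hx => ne_of_gt hx)
  refine this.congr fun x => ?_
  simp [h0, div_eq_inv_mul]

theorem tendsto_div_sq_of_smooth {f : ℝ → ℝ} (hf : ContDiff ℝ (⊤ : ℕ∞) f) (h0 : f 0 = 0)
    (h1 : deriv f 0 = 0) :
    Tendsto (fun x => f x / x ^ 2) (𝓝[>] 0) (𝓝 (deriv (deriv f) 0 / 2)) := by
  have hc : Tendsto f (𝓝[>] 0) (𝓝 0) := by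
    simpa [h0] using hf.continuous.continuousWithinAt (s := Ioi (0 : ℝ)) (x := 0) |>.tendsto
  have hsq : Tendsto (fun x : ℝ => x ^ 2) (𝓝[>] 0) (𝓝 0) := by
    simpa using (continuous_pow 2 (M := ℝ)).continuousWithinAt (s := Ioi (0 : ℝ)) (x := 0)
      |>.tendsto
  refine HasDerivAt.lhopital_zero_nhdsGT (f' := deriv f) (g' := fun x => 2 * x)
    (Eventually.of_forall fun x => hasDerivAt_of_smooth hf x)
    (Eventually.of_forall fun x => by simpa using hasDerivAt_pow 2 x) ?_ hc hsq ?_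
  · filter_upwards [self_mem_nhdsWithin] with x hx
    have : (0 : ℝ) < x := hx
    positivity
  · refine ((tendsto_div_self_of_smooth (contDiff_deriv_of_smooth hf) h1).div_const 2).congr
      fun x => ?_
    rw [div_div, mul_comm]

theorem exists_abs_le_of_continuousOn {f : ℝ → ℝ} {a b : ℝ} (hf : ContinuousOn f (Icc a b)) :
    ∃ K, 0 ≤ K ∧ ∀ x ∈ Icc a b, |f x| ≤ K := by
  obtain ⟨K, hK⟩ := isCompact_Icc.exists_bound_of_continuousOn hf
  exact ⟨|K|, abs_nonneg K, fun x hx => (hK x hx).trans (le_abs_self K)⟩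

theorem exists_abs_le_mul_of_smooth {f : ℝ → ℝ} (hf : ContDiff ℝ (⊤ : ℕ∞) f) (h0 : f 0 = 0)
    (b : ℝ) : ∃ K, 0 ≤ K ∧ ∀ x ∈ Icc 0 b, |f x| ≤ K * x := by
  obtain ⟨K, hK⟩ := hf.contDiffOn.exists_lipschitzOnWith (by simp) (convex_Icc 0 b) isCompact_Icc
  refine ⟨K, K.2, fun x hx => ?_⟩
  have := hK.dist_le_mul x hx 0 ⟨le_rfl, hx.1.trans hx.2⟩
  rwa [Real.dist_eq, Real.dist_eq, h0, sub_zero, sub_zero, abs_of_nonneg hx.1] at this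

theorem exists_abs_comp_sub_le {F : ℝ × ℝ → ℝ} (hF : ContDiff ℝ 1 F) {p₁ p₂ q₁ q₂ : ℝ → ℝ}
    (hp₁ : Continuous p₁) (hp₂ : Continuous p₂) (hq₁ : Continuous q₁) (hq₂ : Continuous q₂)
    (a b : ℝ) :
    ∃ K, 0 ≤ K ∧ ∀ x ∈ Icc a b,
      |F (p₁ x, p₂ x) - F (q₁ x, q₂ x)| ≤ K * (|p₁ x - q₁ x| + |p₂ x - q₂ x|) := by
  obtain ⟨r₁, -, h₁⟩ := exists_abs_le_of_continuousOn (a := a) (b := b) hp₁.continuousOn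
  obtain ⟨r₂, -, h₂⟩ := exists_abs_le_of_continuousOn (a := a) (b := b) hp₂.continuousOn
  obtain ⟨s₁, -, k₁⟩ := exists_abs_le_of_continuousOn (a := a) (b := b) hq₁.continuousOn
  obtain ⟨s₂, -, k₂⟩ := exists_abs_le_of_continuousOn (a := a) (b := b) hq₂.continuousOn
  set R := max (max r₁ r₂) (max s₁ s₂) with hR
  obtain ⟨K, hK⟩ := hF.contDiffOn.exists_lipschitzOnWith (by simp)
    ((convex_Icc (-R) R).prod (convex_Icc (-R) R)) (isCompact_Icc.prod isCompact_Icc)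
  refine ⟨K, K.2, fun x hx => ?_⟩
  have m₁ := abs_le.1 ((h₁ x hx).trans (by simp [hR] : r₁ ≤ R))
  have m₂ := abs_le.1 ((h₂ x hx).trans (by simp [hR] : r₂ ≤ R))
  have n₁ := abs_le.1 ((k₁ x hx).trans (by simp [hR] : s₁ ≤ R))
  have n₂ := abs_le.1 ((k₂ x hx).trans (by simp [hR] : s₂ ≤ R))
  have := hK.dist_le_mul (p₁ x, p₂ x) ⟨m₁, m₂⟩ (q₁ x, q₂ x) ⟨n₁, n₂⟩
  rw [Real.dist_eq, Prod.dist_eq, Real.dist_eq, Real.dist_eq] at this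
  refine this.trans (mul_le_mul_of_nonneg_left ?_ K.2)
  exact max_le_add_of_nonneg (abs_nonneg _) (abs_nonneg _)

theorem one_sub_sq_pos {x : ℝ} (hx : x ∈ Ioo (0 : ℝ) 1) : 0 < 1 - x ^ 2 := by
  nlinarith [hx.1, hx.2]

namespace ReducedBergerSolution

variable {G y w ya wa yb wb : ℝ → ℝ}

theorem hasDerivAt_flux (h : ReducedBergerSolution G y w) {x : ℝ} (hx : x ∈ Ioo (0 : ℝ) 1) :
    HasDerivAt (bergerFlux y w)
      (32 * (x ^ 2)⁻¹ * (1 - x ^ 2) * (Real.exp (y x / 6) * G (w x))) x := by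
  have hx0 : x ≠ 0 := hx.1.ne'
  have h1 : 1 - x ^ 2 ≠ 0 := (one_sub_sq_pos hx).ne'
  have d1 : HasDerivAt (fun x : ℝ => (x ^ 2)⁻¹) (-(2 * x) / (x ^ 2) ^ 2) x :=
    ((hasDerivAt_pow 2 x).fun_inv (by positivity)).congr_deriv (by simp)
  have d2 : HasDerivAt (fun x : ℝ => (1 - x ^ 2) ^ 3) (3 * (1 - x ^ 2) ^ 2 * (-(2 * x))) x :=
    (((hasDerivAt_pow 2 x).const_sub 1).fun_pow 3).congr_deriv (by simp)
  have d3 := ((hasDerivAt_of_smooth h.smooth_y x).div_const 2).exp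
  have d4 := hasDerivAt_of_smooth (contDiff_deriv_of_smooth h.smooth_w) x
  have hE : Real.exp (y x / 6) = Real.exp (y x / 2) * Real.exp (-(y x) / 3) := by
    rw [← Real.exp_add]; ring_nf
  refine (((d1.fun_mul d2).fun_mul d3).fun_mul d4).congr_deriv ?_
  rw [h.eq_w x hx, hE]
  field_simp
  ring

theorem hasDerivAt_diffFlux (ha : ReducedBergerSolution G ya wa)
    (hb : ReducedBergerSolution G yb wb) {x : ℝ} (hx : x ∈ Ioo (0 : ℝ) 1) :
    HasDerivAt (bergerDiffFlux ya yb)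
      (-(1 / 3) * x⁻¹ * (1 - x ^ 2) ^ 2 * Real.exp ((ya x + yb x) / 6)
        * (deriv wa x + deriv wb x) * (deriv wa x - deriv wb x)) x := by
  have hx0 : x ≠ 0 := hx.1.ne'
  have h1 : 1 - x ^ 2 ≠ 0 := (one_sub_sq_pos hx).ne'
  have d2 : HasDerivAt (fun x : ℝ => (1 - x ^ 2) ^ 2) (2 * (1 - x ^ 2) * (-(2 * x))) x :=
    (((hasDerivAt_pow 2 x).const_sub 1).fun_pow 2).congr_deriv (by simp)
  have d3 := (((hasDerivAt_of_smooth ha.smooth_y x).fun_add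
    (hasDerivAt_of_smooth hb.smooth_y x)).div_const 6).exp
  have d4 := (hasDerivAt_of_smooth (contDiff_deriv_of_smooth ha.smooth_y) x).fun_sub
    (hasDerivAt_of_smooth (contDiff_deriv_of_smooth hb.smooth_y) x)
  refine ((((hasDerivAt_inv hx0).fun_mul d2).fun_mul d3).fun_mul d4).congr_deriv ?_
  rw [ha.eq_y x hx, hb.eq_y x hx]
  field_simp
  ring

/-- Minimum principle: `w` is nonnegative. -/
theorem w_nonneg (h : ReducedBergerSolution G y w) (hGneg : ∀ t < 0, G t < 0) (h0 : 0 ≤ w 0) :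
    ∀ x ∈ Icc (0 : ℝ) 1, 0 ≤ w x := by
  obtain ⟨c, hc, hmin⟩ := isCompact_Icc.exists_isMinOn (nonempty_Icc.2 (zero_le_one (α := ℝ)))
    h.smooth_w.continuous.continuousOn
  intro x hx
  refine le_trans ?_ (hmin hx)
  by_contra! hneg
  have hc' : c ∈ Ioo (0 : ℝ) 1 :=
    ⟨hc.1.lt_of_ne fun e => by rw [← e] at hneg; linarith,
      hc.2.lt_of_ne fun e => by rw [e, h.w_one] at hneg; linarith⟩
  have hlmin : IsLocalMin w c := hmin.isLocalMin (Icc_mem_nhds hc'.1 hc'.2)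
  have hd : deriv w c = 0 := hlmin.deriv_eq_zero
  have hdd : deriv (deriv w) c < 0 := by
    rw [h.eq_w c hc', hd]
    have h1 := one_sub_sq_pos hc'
    have : 0 < 32 * ((1 - c ^ 2)⁻¹) ^ 2 * Real.exp (-(y c) / 3) := by positivity
    have := mul_neg_of_pos_of_neg this (hGneg _ hneg)
    simpa using this
  have hlmax := isLocalMax_of_deriv_deriv_neg hdd hd h.smooth_w.continuous.continuousAt
  have hconst : w =ᶠ[𝓝 c] fun _ => w c := by
    filter_upwards [hlmin, hlmax] with t h1 h2 using le_antisymm h2 h1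
  have := hconst.deriv.deriv_eq
  simp at this
  linarith

theorem deriv_w_nonpos (h : ReducedBergerSolution G y w) (hGneg : ∀ t < 0, G t < 0)
    (hGpos : ∀ t, 0 ≤ t → 0 ≤ G t) (h0 : 0 ≤ w 0) :
    ∀ x ∈ Ioo (0 : ℝ) 1, deriv w x ≤ 0 := by
  have hcont : ContinuousOn (bergerFlux y w) (Ioc 0 1) := by
    have := h.smooth_y.continuous
    have := (contDiff_deriv_of_smooth h.smooth_w).continuous
    unfold bergerFlux
    refine ContinuousOn.mul (ContinuousOn.mul (ContinuousOn.mul ?_ ?_) ?_) ?_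
    · exact ContinuousOn.inv₀ (by fun_prop) fun x hx => by have := hx.1; positivity
    all_goals fun_prop
  have hmono : MonotoneOn (bergerFlux y w) (Ioc 0 1) := by
    refine monotoneOn_of_deriv_nonneg (convex_Ioc 0 1) hcont ?_ ?_ <;> rw [interior_Ioc]
    · exact fun x hx => (h.hasDerivAt_flux hx).differentiableAt.differentiableWithinAt
    · intro x hx
      rw [(h.hasDerivAt_flux hx).deriv]
      have := one_sub_sq_pos hx
      have := hGpos _ (h.w_nonneg hGneg h0 x (Ioo_subset_Icc_self hx))
      positivity
  intro x hx
  have hle := hmono (Ioo_subset_Ioc_self hx) (right_mem_Ioc.2 one_pos) hx.2.le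
  have : bergerFlux y w 1 = 0 := by simp [bergerFlux]
  rw [this] at hle
  by_contra! hpos
  have h1 := one_sub_sq_pos hx
  have := hx.1
  have : 0 < bergerFlux y w x := by unfold bergerFlux; positivity
  linarith

theorem w_le (h : ReducedBergerSolution G y w) (hGneg : ∀ t < 0, G t < 0)
    (hGpos : ∀ t, 0 ≤ t → 0 ≤ G t) (h0 : 0 ≤ w 0) :
    ∀ x ∈ Icc (0 : ℝ) 1, w x ≤ w 0 := by
  have : AntitoneOn w (Icc 0 1) := by
    refine antitoneOn_of_deriv_nonpos (convex_Icc 0 1) h.smooth_w.continuous.continuousOn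
      (fun x _ => (hasDerivAt_of_smooth h.smooth_w x).differentiableAt.differentiableWithinAt) ?_
    rw [interior_Icc]
    exact h.deriv_w_nonpos hGneg hGpos h0
  exact fun x hx => this (left_mem_Icc.2 zero_le_one) hx hx.1

theorem deriv_deriv_w_zero (h : ReducedBergerSolution G y w) (hG : Continuous G) :
    deriv (deriv w) 0 = -(32 * Real.exp (-(y 0) / 3) * G (w 0)) := by
  have hy := h.smooth_y.continuous
  have hw := h.smooth_w.continuous
  have hy' := (contDiff_deriv_of_smooth h.smooth_y).continuous
  have hw' := (contDiff_deriv_of_smooth h.smooth_w).continuous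
  have hw'' := (contDiff_deriv_of_smooth (contDiff_deriv_of_smooth h.smooth_w)).continuous
  have l1 : Tendsto (deriv (deriv w)) (𝓝[>] 0) (𝓝 (deriv (deriv w) 0)) :=
    hw''.continuousWithinAt.tendsto
  have l2 := tendsto_div_self_of_smooth (contDiff_deriv_of_smooth h.smooth_w) h.deriv_w_zero
  have c1 : ContinuousAt (fun x : ℝ => 2 * (1 + 2 * x ^ 2) * (1 - x ^ 2)⁻¹) 0 :=
    ContinuousAt.mul (by fun_prop) (ContinuousAt.inv₀ (by fun_prop) (by norm_num))
  have c2 : ContinuousAt (fun x : ℝ => -((1 / 2) * deriv y x * deriv w x)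
      + 32 * ((1 - x ^ 2)⁻¹) ^ 2 * Real.exp (-(y x) / 3) * G (w x)) 0 := by
    have : ContinuousAt (fun x : ℝ => (1 - x ^ 2)⁻¹) 0 :=
      ContinuousAt.inv₀ (by fun_prop) (by norm_num)
    fun_prop
  have l3 := ((c1.continuousWithinAt (s := Ioi 0)).tendsto.mul l2).add
    (c2.continuousWithinAt (s := Ioi 0)).tendsto
  have l4 := l3.congr' (f₂ := deriv (deriv w)) (by
    filter_upwards [Ioo_mem_nhdsGT (zero_lt_one (α := ℝ))] with x hx
    rw [h.eq_w x hx]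
    have := hx.1.ne'
    field_simp
    ring)
  have := tendsto_nhds_unique l1 l4
  simp [h.deriv_y_zero, h.deriv_w_zero] at this
  linarith

theorem tendsto_deriv_w_sub_div_sq
    (ha : ReducedBergerSolution G ya wa) (hb : ReducedBergerSolution G yb wb) (hG : Continuous G)
    (hy0 : ya 0 = yb 0) (hw0 : wa 0 = wb 0) :
    Tendsto (fun x => (deriv wa x - deriv wb x) / x ^ 2) (𝓝[>] 0)
      (𝓝 ((deriv (deriv (deriv wa)) 0 - deriv (deriv (deriv wb)) 0) / 2)) := by
  have sa := contDiff_deriv_of_smooth ha.smooth_w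
  have sb := contDiff_deriv_of_smooth hb.smooth_w
  have hd : deriv (fun x => deriv wa x - deriv wb x) =
      fun x => deriv (deriv wa) x - deriv (deriv wb) x :=
    funext fun x => ((hasDerivAt_of_smooth sa x).fun_sub (hasDerivAt_of_smooth sb x)).deriv
  have hdd : deriv (fun x => deriv (deriv wa) x - deriv (deriv wb) x) 0 =
      deriv (deriv (deriv wa)) 0 - deriv (deriv (deriv wb)) 0 :=
    ((hasDerivAt_of_smooth (contDiff_deriv_of_smooth sa) 0).fun_sub
      (hasDerivAt_of_smooth (contDiff_deriv_of_smooth sb) 0)).deriv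
  have := tendsto_div_sq_of_smooth (sa.sub sb)
    (by simp [ha.deriv_w_zero, hb.deriv_w_zero])
    (by rw [hd]; beta_reduce; rw [ha.deriv_deriv_w_zero hG, hb.deriv_deriv_w_zero hG, hy0, hw0, sub_self])
  rwa [hd, hdd] at this

theorem tendsto_flux_sub
    (ha : ReducedBergerSolution G ya wa) (hb : ReducedBergerSolution G yb wb) (hG : Continuous G)
    (hy0 : ya 0 = yb 0) (hw0 : wa 0 = wb 0) :
    Tendsto (fun x => bergerFlux ya wa x - bergerFlux yb wb x) (𝓝[>] 0)
      (𝓝 (Real.exp (ya 0 / 2)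
        * ((deriv (deriv (deriv wa)) 0 - deriv (deriv (deriv wb)) 0) / 2))) := by
  have l1 := tendsto_deriv_w_sub_div_sq ha hb hG hy0 hw0
  have l2 := tendsto_div_self_of_smooth (contDiff_deriv_of_smooth hb.smooth_w) hb.deriv_w_zero
  have hf : ContDiff ℝ (⊤ : ℕ∞) fun x => Real.exp (ya x / 2) - Real.exp (yb x / 2) :=
    (ha.smooth_y.div_const 2).exp.sub (hb.smooth_y.div_const 2).exp
  have l3 := tendsto_div_self_of_smooth hf (by simp [hy0])
  have hd : deriv (fun x => Real.exp (ya x / 2) - Real.exp (yb x / 2)) 0 = 0 := by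
    have := (((hasDerivAt_of_smooth ha.smooth_y 0).div_const 2).exp.fun_sub
      ((hasDerivAt_of_smooth hb.smooth_y 0).div_const 2).exp).deriv
    rw [this, ha.deriv_y_zero, hb.deriv_y_zero]
    simp
  rw [hd] at l3
  have c1 : Continuous fun x => Real.exp (ya x / 2) := by
    have := ha.smooth_y.continuous
    fun_prop
  have c2 : Continuous fun x : ℝ => (1 - x ^ 2) ^ 3 := by fun_prop
  have l4 := (c1.continuousWithinAt (s := Ioi 0) (x := 0)).tendsto
  have l5 := (c2.continuousWithinAt (s := Ioi 0) (x := 0)).tendsto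
  have l6 := l5.mul ((l4.mul l1).add (l3.mul l2))
  simp only [zero_mul, add_zero, ne_eq, OfNat.ofNat_ne_zero, not_false_eq_true, zero_pow, sub_zero,
    one_pow, one_mul] at l6
  refine l6.congr' ?_
  filter_upwards [self_mem_nhdsWithin] with x hx
  have : x ≠ 0 := ne_of_gt hx
  unfold bergerFlux
  field_simp
  ring

theorem tendsto_diffFlux
    (ha : ReducedBergerSolution G ya wa) (hb : ReducedBergerSolution G yb wb)
    (hy2 : deriv (deriv ya) 0 = deriv (deriv yb) 0) :
    Tendsto (bergerDiffFlux ya yb) (𝓝[>] 0) (𝓝 0) := by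
  have sa := contDiff_deriv_of_smooth ha.smooth_y
  have sb := contDiff_deriv_of_smooth hb.smooth_y
  have l1 := tendsto_div_self_of_smooth (sa.sub sb)
    (by simp [ha.deriv_y_zero, hb.deriv_y_zero])
  have hd : deriv (fun x => deriv ya x - deriv yb x) 0 = 0 := by
    rw [((hasDerivAt_of_smooth sa 0).fun_sub (hasDerivAt_of_smooth sb 0)).deriv, hy2, sub_self]
  rw [hd] at l1
  have c1 : Continuous fun x => (1 - x ^ 2) ^ 2 * Real.exp ((ya x + yb x) / 6) := by
    have := ha.smooth_y.continuous
    have := hb.smooth_y.continuous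
    fun_prop
  have l2 := (c1.continuousWithinAt (s := Ioi 0) (x := 0)).tendsto.mul l1
  rw [mul_zero] at l2
  refine l2.congr fun x => ?_
  unfold bergerDiffFlux
  ring

/-- If the third derivatives of `w` at `0` were ordered strictly, then `wa - wb` would be
increasing on `[0, 1]`, contradicting the boundary condition at `1`. -/
theorem third_deriv_w_le
    (ha : ReducedBergerSolution G ya wa) (hb : ReducedBergerSolution G yb wb) (hG : Continuous G)
    (hy0 : ya 0 = yb 0) (hw0 : wa 0 = wb 0) (hy2 : deriv (deriv ya) 0 = deriv (deriv yb) 0)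
    (hGneg : ∀ t < 0, G t < 0) (hGpos : ∀ t, 0 ≤ t → 0 ≤ G t) (h0 : 0 ≤ wa 0)
    (hGmono : MonotoneOn G (Icc 0 (wa 0))) :
    deriv (deriv (deriv wa)) 0 ≤ deriv (deriv (deriv wb)) 0 := by
  by_contra! hlt
  have hb0 : 0 ≤ wb 0 := hw0 ▸ h0
  have sa := contDiff_deriv_of_smooth ha.smooth_w
  have sb := contDiff_deriv_of_smooth hb.smooth_w
  have dz₂ : ∀ x, HasDerivAt (fun x => wa x - wb x) (deriv wa x - deriv wb x) x := fun x =>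
    (hasDerivAt_of_smooth ha.smooth_w x).fun_sub (hasDerivAt_of_smooth hb.smooth_w x)
  have dz₁ : ∀ x, HasDerivAt (fun x => ya x - yb x) (deriv ya x - deriv yb x) x := fun x =>
    (hasDerivAt_of_smooth ha.smooth_y x).fun_sub (hasDerivAt_of_smooth hb.smooth_y x)
  obtain ⟨ε, hε, hε'⟩ : ∃ ε > 0, ∀ x ∈ Ioo (0 : ℝ) ε, 0 < deriv wa x - deriv wb x := by
    have h1 := (tendsto_deriv_w_sub_div_sq ha hb hG hy0 hw0).eventually
      (lt_mem_nhds (by linarith :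
        0 < (deriv (deriv (deriv wa)) 0 - deriv (deriv (deriv wb)) 0) / 2))
    obtain ⟨ε, hε, hs⟩ := mem_nhdsGT_iff_exists_Ioo_subset.1 h1
    refine ⟨ε, hε, fun x hx => ?_⟩
    have h2 : 0 < (deriv wa x - deriv wb x) / x ^ 2 := hs hx
    have : 0 < x ^ 2 := by have := hx.1; positivity
    exact (div_pos_iff_of_pos_right this).1 h2
  have nonneg_of_deriv : ∀ {f f' : ℝ → ℝ} {b : ℝ}, (∀ x ∈ Ioo 0 b, HasDerivAt f (f' x) x) →
      (∀ x ∈ Ioo 0 b, 0 ≤ f' x) → MonotoneOn f (Ioo 0 b) := fun {f f' b} hf hf' => by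
    refine monotoneOn_of_deriv_nonneg (convex_Ioo 0 b)
      (fun x hx => (hf x hx).continuousAt.continuousWithinAt) ?_ ?_ <;> rw [interior_Ioo]
    · exact fun x hx => (hf x hx).differentiableAt.differentiableWithinAt
    · exact fun x hx => by rw [(hf x hx).deriv]; exact hf' x hx
  have pos : ∀ x ∈ Ioo (0 : ℝ) 1, 0 < deriv wa x - deriv wb x := by
    by_contra! hex
    obtain ⟨b, hb1, hbneg⟩ := hex
    have hεb : ε ≤ b := by
      by_contra! h
      exact absurd (hε' b ⟨hb1.1, h⟩) (not_lt.2 hbneg)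
    have hcomp : IsCompact (Icc ε b ∩ {x | deriv wa x - deriv wb x ≤ 0}) :=
      isCompact_Icc.inter_right
        (isClosed_le (sa.continuous.sub sb.continuous) continuous_const)
    obtain ⟨c, ⟨hc, hcneg⟩, hcleast⟩ := hcomp.exists_isLeast ⟨b, ⟨hεb, le_rfl⟩, hbneg⟩
    have hc0 : 0 < c := hε.trans_le hc.1
    have hc1 : c < 1 := hc.2.trans_lt hb1.2
    have hcI : c ∈ Ioo (0 : ℝ) 1 := ⟨hc0, hc1⟩
    have sub1 : ∀ x ∈ Ioo 0 c, x ∈ Ioo (0 : ℝ) 1 := fun x hx => ⟨hx.1, hx.2.trans hc1⟩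
    have zpos : ∀ x ∈ Ioo 0 c, 0 < deriv wa x - deriv wb x := by
      intro x hx
      rcases lt_or_ge x ε with h | h
      · exact hε' x ⟨hx.1, h⟩
      · by_contra! hn
        exact absurd (hcleast ⟨⟨h, hx.2.le.trans hc.2⟩, hn⟩) (not_le.2 hx.2)
    have mono_z₂ : MonotoneOn (fun x => wa x - wb x) (Icc 0 c) := by
      refine monotoneOn_of_deriv_nonneg (convex_Icc 0 c)
        (ha.smooth_w.continuous.sub hb.smooth_w.continuous).continuousOn
        (fun x _ => (dz₂ x).differentiableAt.differentiableWithinAt) ?_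
      rw [interior_Icc]
      exact fun x hx => by rw [(dz₂ x).deriv]; exact (zpos x hx).le
    have z₂nonneg : ∀ x ∈ Icc 0 c, wb x ≤ wa x := fun x hx => by
      have := mono_z₂ (left_mem_Icc.2 hc0.le) hx hx.1
      simp only [hw0, sub_self] at this
      linarith
    have dUpos : MonotoneOn (bergerDiffFlux ya yb) (Ioo 0 c) :=
      nonneg_of_deriv (fun x hx => hasDerivAt_diffFlux ha hb (sub1 x hx)) fun x hx => by
        have h1 := ha.deriv_w_nonpos hGneg hGpos h0 x (sub1 x hx)
        have h2 := hb.deriv_w_nonpos hGneg hGpos hb0 x (sub1 x hx)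
        have h3 := (zpos x hx).le
        have h4 := hx.1
        have : 0 ≤ 1 / 3 * x⁻¹ * (1 - x ^ 2) ^ 2 * Real.exp ((ya x + yb x) / 6) := by positivity
        have := mul_nonneg (mul_nonneg this (by linarith : 0 ≤ -(deriv wa x + deriv wb x))) h3
        linarith
    have Unonneg : ∀ x ∈ Ioo 0 c, 0 ≤ bergerDiffFlux ya yb x := fun x hx => by
      refine le_of_tendsto (tendsto_diffFlux ha hb hy2) ?_
      filter_upwards [Ioo_mem_nhdsGT hx.1] with t ht
      exact dUpos ⟨ht.1, ht.2.trans hx.2⟩ hx ht.2.le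
    have z₁'nonneg : ∀ x ∈ Ioo 0 c, 0 ≤ deriv ya x - deriv yb x := fun x hx => by
      by_contra! hn
      have h1 := one_sub_sq_pos (sub1 x hx)
      have h2 := hx.1
      have : 0 < x⁻¹ * (1 - x ^ 2) ^ 2 * Real.exp ((ya x + yb x) / 6) := by positivity
      have := mul_neg_of_pos_of_neg this hn
      exact absurd (Unonneg x hx) (not_le.2 this)
    have mono_z₁ : MonotoneOn (fun x => ya x - yb x) (Icc 0 c) := by
      refine monotoneOn_of_deriv_nonneg (convex_Icc 0 c)
        (ha.smooth_y.continuous.sub hb.smooth_y.continuous).continuousOn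
        (fun x _ => (dz₁ x).differentiableAt.differentiableWithinAt) ?_
      rw [interior_Icc]
      exact fun x hx => by rw [(dz₁ x).deriv]; exact z₁'nonneg x hx
    have z₁nonneg : ∀ x ∈ Icc 0 c, yb x ≤ ya x := fun x hx => by
      have := mono_z₁ (left_mem_Icc.2 hc0.le) hx hx.1
      simp only [hy0, sub_self] at this
      linarith
    have dW : ∀ x ∈ Ioo (0 : ℝ) 1, HasDerivAt (fun x => bergerFlux ya wa x - bergerFlux yb wb x)
        (32 * (x ^ 2)⁻¹ * (1 - x ^ 2) * (Real.exp (ya x / 6) * G (wa x))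
          - 32 * (x ^ 2)⁻¹ * (1 - x ^ 2) * (Real.exp (yb x / 6) * G (wb x))) x :=
      fun x hx => (ha.hasDerivAt_flux hx).fun_sub (hb.hasDerivAt_flux hx)
    have dWnonneg : ∀ x ∈ Ioo 0 c,
        0 ≤ 32 * (x ^ 2)⁻¹ * (1 - x ^ 2) * (Real.exp (ya x / 6) * G (wa x))
          - 32 * (x ^ 2)⁻¹ * (1 - x ^ 2) * (Real.exp (yb x / 6) * G (wb x)) := fun x hx => by
      have hx1 := Ioo_subset_Icc_self (sub1 x hx)
      have hxc := Ioo_subset_Icc_self hx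
      have g1 : G (wb x) ≤ G (wa x) := hGmono
        ⟨hb.w_nonneg hGneg hb0 x hx1, hw0 ▸ hb.w_le hGneg hGpos hb0 x hx1⟩
        ⟨ha.w_nonneg hGneg h0 x hx1, ha.w_le hGneg hGpos h0 x hx1⟩ (z₂nonneg x hxc)
      have g2 : 0 ≤ G (wb x) := hGpos _ (hb.w_nonneg hGneg hb0 x hx1)
      have h1 := one_sub_sq_pos (sub1 x hx)
      have := z₁nonneg x hxc
      rw [sub_nonneg]
      gcongr
    have monoW : MonotoneOn (fun x => bergerFlux ya wa x - bergerFlux yb wb x) (Ioc 0 c) := by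
      refine monotoneOn_of_deriv_nonneg (convex_Ioc 0 c)
        (fun x hx => (dW x ⟨hx.1, hx.2.trans_lt hc1⟩).continuousAt.continuousWithinAt) ?_ ?_ <;>
        rw [interior_Ioc]
      · exact fun x hx => (dW x (sub1 x hx)).differentiableAt.differentiableWithinAt
      · exact fun x hx => by rw [(dW x (sub1 x hx)).deriv]; exact dWnonneg x hx
    have Wpos : 0 < bergerFlux ya wa c - bergerFlux yb wb c := by
      refine lt_of_lt_of_le ?_ (le_of_tendsto (tendsto_flux_sub ha hb hG hy0 hw0) (b :=
        bergerFlux ya wa c - bergerFlux yb wb c) ?_)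
      · have : 0 < (deriv (deriv (deriv wa)) 0 - deriv (deriv (deriv wb)) 0) / 2 := by linarith
        positivity
      · filter_upwards [Ioo_mem_nhdsGT hc0] with t ht
        exact monoW ⟨ht.1, ht.2.le⟩ (right_mem_Ioc.2 hc0) ht.2.le
    have h1 := one_sub_sq_pos hcI
    have hP : 0 < (c ^ 2)⁻¹ * (1 - c ^ 2) ^ 3 := by positivity
    have hexp : Real.exp (yb c / 2) ≤ Real.exp (ya c / 2) :=
      Real.exp_le_exp.2 (by linarith [z₁nonneg c (right_mem_Icc.2 hc0.le)])
    have hwa := ha.deriv_w_nonpos hGneg hGpos h0 c hcI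
    have hcneg' : deriv wa c ≤ deriv wb c := sub_nonpos.1 hcneg
    have hfin : Real.exp (ya c / 2) * deriv wa c ≤ Real.exp (yb c / 2) * deriv wb c := by
      have := mul_le_mul_of_nonneg_left hcneg' (Real.exp_pos (yb c / 2)).le
      have := mul_le_mul_of_nonpos_right hexp hwa
      linarith
    have := mul_le_mul_of_nonneg_left hfin hP.le
    unfold bergerFlux at Wpos
    linarith
  have mono : StrictMonoOn (fun x => wa x - wb x) (Icc 0 1) := by
    refine strictMonoOn_of_deriv_pos (convex_Icc 0 1)
      (ha.smooth_w.continuous.sub hb.smooth_w.continuous).continuousOn ?_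
    rw [interior_Icc]
    exact fun x hx => by rw [(dz₂ x).deriv]; exact pos x hx
  have := mono (left_mem_Icc.2 zero_le_one) (right_mem_Icc.2 zero_le_one) zero_lt_one
  simp [hw0, ha.w_one, hb.w_one] at this

/-- Two solutions with the same jets at `0` agree near `0`. -/
theorem eq_near_zero
    (ha : ReducedBergerSolution G ya wa) (hb : ReducedBergerSolution G yb wb) (hy0 : ya 0 = yb 0)
    (hw0 : wa 0 = wb 0) (hy2 : deriv (deriv ya) 0 = deriv (deriv yb) 0)
    (hG1 : ContDiff ℝ 1 G)
    (hw3 : deriv (deriv (deriv wa)) 0 = deriv (deriv (deriv wb)) 0) :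
    ∃ δ > 0, ∀ x ∈ Ioo (0 : ℝ) δ, ya x - yb x = 0 ∧ wa x - wb x = 0 := by
  have cya := ha.smooth_y.continuous
  have cyb := hb.smooth_y.continuous
  have cwa := ha.smooth_w.continuous
  have cwb := hb.smooth_w.continuous
  have lt1 : ∀ x ∈ Icc (0 : ℝ) (1 / 2), 1 - x ^ 2 ≠ 0 := fun x hx => by
    nlinarith [hx.1, hx.2]
  obtain ⟨Da, hDa0, hDa⟩ := exists_abs_le_mul_of_smooth
    (contDiff_deriv_of_smooth ha.smooth_w) ha.deriv_w_zero (1 / 2)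
  obtain ⟨Db, hDb0, hDb⟩ := exists_abs_le_mul_of_smooth
    (contDiff_deriv_of_smooth hb.smooth_w) hb.deriv_w_zero (1 / 2)
  obtain ⟨C₁, hC₁0, hC₁⟩ := exists_abs_le_of_continuousOn (a := 0) (b := 1 / 2)
    (f := fun x => ((1 - x ^ 2) ^ 2 * Real.exp ((ya x + yb x) / 6))⁻¹)
    (ContinuousOn.inv₀ (by fun_prop) fun x hx =>
      mul_ne_zero (pow_ne_zero _ (lt1 x hx)) (Real.exp_pos _).ne')
  obtain ⟨C₂, hC₂0, hC₂⟩ := exists_abs_le_of_continuousOn (a := 0) (b := 1 / 2)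
    (f := fun x => ((1 - x ^ 2) ^ 3 * Real.exp (ya x / 2))⁻¹)
    (ContinuousOn.inv₀ (by fun_prop) fun x hx =>
      mul_ne_zero (pow_ne_zero _ (lt1 x hx)) (Real.exp_pos _).ne')
  obtain ⟨C₃, hC₃0, hC₃⟩ := exists_abs_le_of_continuousOn (a := 0) (b := 1 / 2)
    (f := fun x => (Real.exp (ya x / 2))⁻¹)
    (ContinuousOn.inv₀ (by fun_prop) fun x _ => (Real.exp_pos _).ne')
  obtain ⟨C₄, hC₄0, hC₄⟩ := exists_abs_le_of_continuousOn (a := 0) (b := 1 / 2)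
    (f := fun x => (1 - x ^ 2) ^ 2 * Real.exp ((ya x + yb x) / 6)) (by fun_prop)
  obtain ⟨L₁, hL₁0, hL₁⟩ := exists_abs_comp_sub_le (F := fun p => Real.exp (p.1 / 2))
    (by fun_prop) cya (continuous_const (y := (0 : ℝ))) cyb (continuous_const (y := (0 : ℝ)))
    0 (1 / 2)
  obtain ⟨L₂, hL₂0, hL₂⟩ := exists_abs_comp_sub_le (F := fun p => Real.exp (p.1 / 6) * G p.2)
    (by fun_prop) cya cwa cyb cwb 0 (1 / 2)
  simp only [sub_self, abs_zero, add_zero] at hL₁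
  set C := C₁ + C₂ + C₃ * L₁ * Db + C₄ * (Da + Db) + 32 * L₂ with hC
  have p₁ : 0 ≤ C₃ * L₁ * Db := by positivity
  have p₂ : 0 ≤ C₄ * (Da + Db) := by positivity
  have hWlim := tendsto_flux_sub ha hb hG1.continuous hy0 hw0
  rw [hw3, sub_self, zero_div, mul_zero] at hWlim
  have sub1 : ∀ x ∈ Ioo (0 : ℝ) (1 / 2), x ∈ Ioo (0 : ℝ) 1 := fun x hx =>
    ⟨hx.1, by linarith [hx.2]⟩
  refine singular_gronwall (b := 1 / 2) (C := C) (by norm_num) (by positivity)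
    (fun x _ => (hasDerivAt_of_smooth ha.smooth_y x).fun_sub (hasDerivAt_of_smooth hb.smooth_y x))
    (fun x _ => (hasDerivAt_of_smooth ha.smooth_w x).fun_sub (hasDerivAt_of_smooth hb.smooth_w x))
    (fun x hx => hasDerivAt_diffFlux ha hb (sub1 x hx))
    (fun x hx => (ha.hasDerivAt_flux (sub1 x hx)).fun_sub (hb.hasDerivAt_flux (sub1 x hx)))
    ?_ ?_ (tendsto_diffFlux ha hb hy2) hWlim ?_ ?_ ?_ ?_
  · simpa [hy0] using ((cya.fun_sub cyb).continuousWithinAt (s := Ioi 0) (x := 0)).tendsto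
  · simpa [hw0] using ((cwa.fun_sub cwb).continuousWithinAt (s := Ioi 0) (x := 0)).tendsto
  all_goals
    intro x hx
    have hx0 := hx.1
    have hx0' : x ≠ 0 := hx0.ne'
    have hxI := Ioo_subset_Icc_self hx
    have h1 := one_sub_sq_pos (sub1 x hx)
    have h1' := h1.ne'
  · have e : deriv ya x - deriv yb x =
        ((1 - x ^ 2) ^ 2 * Real.exp ((ya x + yb x) / 6))⁻¹ * (x * bergerDiffFlux ya yb x) := by
      unfold bergerDiffFlux
      field_simp
    rw [e, abs_mul, abs_mul, abs_of_pos hx0]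
    exact mul_le_mul_of_nonneg_right ((hC₁ x hxI).trans (by linarith)) (by positivity)
  · have e : deriv wa x - deriv wb x =
        ((1 - x ^ 2) ^ 3 * Real.exp (ya x / 2))⁻¹
            * (x ^ 2 * (bergerFlux ya wa x - bergerFlux yb wb x))
          - (Real.exp (ya x / 2))⁻¹ * ((Real.exp (ya x / 2) - Real.exp (yb x / 2)) * deriv wb x) := by
      unfold bergerFlux
      field_simp
      ring
    rw [e]
    refine (abs_sub _ _).trans ?_
    rw [abs_mul, abs_mul, abs_mul (Real.exp (ya x / 2))⁻¹, abs_mul _ (deriv wb x), abs_pow,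
      abs_of_pos hx0]
    calc _ ≤ C₂ * (x ^ 2 * |bergerFlux ya wa x - bergerFlux yb wb x|)
          + C₃ * ((L₁ * |ya x - yb x|) * (Db * x)) := by
          have := hC₂ x hxI
          have := hC₃ x hxI
          have := hL₁ x hxI
          have := hDb x hxI
          gcongr
      _ = C₂ * (x ^ 2 * |bergerFlux ya wa x - bergerFlux yb wb x|)
          + C₃ * L₁ * Db * (x * |ya x - yb x|) := by ring
      _ ≤ C * (x ^ 2 * |bergerFlux ya wa x - bergerFlux yb wb x|)
          + C * (x * |ya x - yb x|) := by gcongr <;> linarith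
      _ = _ := by ring
  · have e : -(1 / 3) * x⁻¹ * (1 - x ^ 2) ^ 2 * Real.exp ((ya x + yb x) / 6)
        * (deriv wa x + deriv wb x) * (deriv wa x - deriv wb x) =
        -(((1 - x ^ 2) ^ 2 * Real.exp ((ya x + yb x) / 6)) * ((1 / 3) * x⁻¹
          * (deriv wa x + deriv wb x))) * (deriv wa x - deriv wb x) := by ring
    rw [e, abs_mul, abs_neg, abs_mul]
    refine mul_le_mul_of_nonneg_right ?_ (abs_nonneg _)
    have hs : |1 / 3 * x⁻¹ * (deriv wa x + deriv wb x)| ≤ Da + Db := by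
      rw [abs_mul, abs_of_pos (by positivity : 0 < 1 / 3 * x⁻¹)]
      have := (abs_add_le (deriv wa x) (deriv wb x)).trans (add_le_add (hDa x hxI) (hDb x hxI))
      calc 1 / 3 * x⁻¹ * |deriv wa x + deriv wb x| ≤ 1 / 3 * x⁻¹ * (Da * x + Db * x) := by gcongr
        _ = 1 / 3 * (Da + Db) := by field_simp
        _ ≤ Da + Db := by linarith
    calc _ ≤ C₄ * (Da + Db) := by
          have := hC₄ x hxI
          gcongr
      _ ≤ C := by linarith
  · have e : 32 * (x ^ 2)⁻¹ * (1 - x ^ 2) * (Real.exp (ya x / 6) * G (wa x))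
          - 32 * (x ^ 2)⁻¹ * (1 - x ^ 2) * (Real.exp (yb x / 6) * G (wb x)) =
        (x ^ 2)⁻¹ * (32 * (1 - x ^ 2)
          * (Real.exp (ya x / 6) * G (wa x) - Real.exp (yb x / 6) * G (wb x))) := by ring
    rw [e, abs_mul, abs_of_pos (by positivity : 0 < (x ^ 2)⁻¹), ← mul_assoc,
      mul_inv_cancel₀ (by positivity), one_mul, abs_mul, abs_of_pos (by positivity)]
    calc _ ≤ 32 * 1 * (L₂ * (|ya x - yb x| + |wa x - wb x|)) := by
          have := hL₂ x hxI
          gcongr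
          nlinarith
      _ = 32 * L₂ * (|ya x - yb x| + |wa x - wb x|) := by ring
      _ ≤ _ := by gcongr; linarith

end ReducedBergerSolution


/-- The zeroth order nonlinearity of (E3) in terms of `w = σ log phi`, where `σ = ± 1`. -/
noncomputable def bergerNonlinearity (σ t : ℝ) : ℝ :=
  σ * (Real.exp (-(σ * t) / 3) - Real.exp (-(4 * (σ * t)) / 3))

theorem contDiff_bergerNonlinearity (σ : ℝ) : ContDiff ℝ 1 (bergerNonlinearity σ) := by
  unfold bergerNonlinearity
  fun_prop

theorem bergerNonlinearity_nonneg {σ : ℝ} (hσ : σ = 1 ∨ σ = -1) {t : ℝ} (ht : 0 ≤ t) :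
    0 ≤ bergerNonlinearity σ t := by
  unfold bergerNonlinearity
  rcases hσ with rfl | rfl
  · have : Real.exp (-(4 * (1 * t)) / 3) ≤ Real.exp (-(1 * t) / 3) :=
      Real.exp_le_exp.2 (by linarith)
    linarith
  · have : Real.exp (-(-1 * t) / 3) ≤ Real.exp (-(4 * (-1 * t)) / 3) :=
      Real.exp_le_exp.2 (by linarith)
    linarith

theorem bergerNonlinearity_neg {σ : ℝ} (hσ : σ = 1 ∨ σ = -1) {t : ℝ} (ht : t < 0) :
    bergerNonlinearity σ t < 0 := by
  unfold bergerNonlinearity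
  rcases hσ with rfl | rfl
  · have : Real.exp (-(1 * t) / 3) < Real.exp (-(4 * (1 * t)) / 3) :=
      Real.exp_lt_exp.2 (by linarith)
    linarith
  · have : Real.exp (-(4 * (-1 * t)) / 3) < Real.exp (-(-1 * t) / 3) :=
      Real.exp_lt_exp.2 (by linarith)
    linarith

theorem sub_pow_four_le {r s : ℝ} (hr : 1 ≤ 4 * r ^ 3) (hr0 : 0 ≤ r) (hrs : r ≤ s) :
    s - s ^ 4 ≤ r - r ^ 4 := by
  have h1 : r ^ 2 ≤ s ^ 2 := by gcongr
  have h2 : 1 ≤ (s + r) * (s ^ 2 + r ^ 2) := by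
    have : (r + r) * (r ^ 2 + r ^ 2) ≤ (s + r) * (s ^ 2 + r ^ 2) := by
      have : 0 ≤ s + r := by linarith
      gcongr
    nlinarith
  nlinarith [mul_nonneg (sub_nonneg.2 hrs) (sub_nonneg.2 h2)]

theorem pow_four_sub_le {r s : ℝ} (hr : 1 ≤ r) (hrs : r ≤ s) :
    r ^ 4 - r ≤ s ^ 4 - s := by
  have h := sub_pow_four_le (by nlinarith [one_le_pow₀ hr (n := 3)]) (by linarith) hrs
  linarith

theorem monotoneOn_bergerNonlinearity {σ T : ℝ} (hσ : σ = 1 ∨ σ = -1) (hT : Real.exp T ≤ 4) :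
    MonotoneOn (bergerNonlinearity σ) (Icc 0 T) := by
  have e4 : ∀ u : ℝ, Real.exp (-(4 * u) / 3) = Real.exp (-u / 3) ^ 4 := fun u => by
    rw [← Real.exp_nat_mul]; push_cast; ring_nf
  intro a ha b hb hab
  unfold bergerNonlinearity
  rw [e4, e4]
  rcases hσ with rfl | rfl
  · have h3 : 1 ≤ 4 * Real.exp (-(1 * b) / 3) ^ 3 := by
      rw [← Real.exp_nat_mul]
      have : Real.exp (((3 : ℕ) : ℝ) * (-(1 * b) / 3)) = (Real.exp b)⁻¹ := by
        rw [← Real.exp_neg]; push_cast; ring_nf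
      rw [this, ← div_eq_mul_inv, one_le_div (Real.exp_pos b)]
      exact (Real.exp_le_exp.2 hb.2).trans hT
    have := sub_pow_four_le h3 (Real.exp_pos _).le
      (Real.exp_le_exp.2 (by linarith : -(1 * b) / 3 ≤ -(1 * a) / 3))
    linarith
  · have := pow_four_sub_le (Real.one_le_exp (by linarith [ha.1] : 0 ≤ -(-1 * a) / 3))
      (Real.exp_le_exp.2 (by linarith : -(-1 * a) / 3 ≤ -(-1 * b) / 3))
    linarith

namespace BergerBVPSolution

variable {y1 y2 : ℝ → ℝ}

theorem reduced (h : BergerBVPSolution y1 y2) {σ : ℝ} (hσ : σ = 1 ∨ σ = -1) :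
    ReducedBergerSolution (bergerNonlinearity σ) y1 (fun x => σ * y2 x) := by
  have hσ2 : σ * σ = 1 := by rcases hσ with rfl | rfl <;> norm_num
  have d1 : deriv (fun x => σ * y2 x) = fun x => σ * deriv y2 x :=
    funext fun x => ((hasDerivAt_of_smooth h.smooth2 x).const_mul σ).deriv
  have d2 : deriv (fun x => σ * deriv y2 x) = fun x => σ * deriv (deriv y2) x :=
    funext fun x =>
      ((hasDerivAt_of_smooth (contDiff_deriv_of_smooth h.smooth2) x).const_mul σ).deriv
  refine ⟨h.smooth1, contDiff_const.mul h.smooth2, fun x hx => ?_, fun x hx => ?_, h.der1_0,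
    ?_, ?_⟩
  · have := h.eqE1 x hx
    unfold BergerE1 at this
    rw [d1]
    linear_combination this + (1 / 3) * deriv y2 x ^ 2 * hσ2
  · have := h.eqE3 x hx
    unfold BergerE3 at this
    rw [← Real.exp_mul, ← Real.exp_mul, ← Real.exp_neg] at this
    have e1 : Real.exp (-(4 * (σ * (σ * y2 x))) / 3) =
        Real.exp (y2 x * (-(1 : ℝ) / 3)) * Real.exp (-y2 x) := by
      rw [← Real.exp_add, ← mul_assoc σ, hσ2]; ring_nf
    have e2 : Real.exp (-(σ * (σ * y2 x)) / 3) = Real.exp (y2 x * (-(1 : ℝ) / 3)) := by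
      rw [← mul_assoc σ, hσ2]; ring_nf
    have e3 : Real.exp (-(y1 x) / 3) = Real.exp (y1 x * (-(1 : ℝ) / 3)) := by ring_nf
    rw [d1, d2]
    unfold bergerNonlinearity
    rw [e1, e2, e3]
    linear_combination σ * this
  · rw [d1]
    simp [h.der2_0]
  · have : y2 1 = 0 := Real.exp_eq_one_iff _ |>.1 h.bdryPhi
    simp [this]

theorem deriv_deriv_y1_zero (h : BergerBVPSolution y1 y2) :
    deriv (deriv y1) 0 =
      2 * (6 - 8 * Real.exp (y1 0) ^ (-(1 : ℝ) / 3) * Real.exp (y2 0) ^ (-(1 : ℝ) / 3)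
        + 2 * Real.exp (y1 0) ^ (-(1 : ℝ) / 3) * Real.exp (y2 0) ^ (-(4 : ℝ) / 3)) := by
  have c1 := h.smooth1.continuous
  have c2 := h.smooth2.continuous
  have c1' := (contDiff_deriv_of_smooth h.smooth1).continuous
  have c1'' := (contDiff_deriv_of_smooth (contDiff_deriv_of_smooth h.smooth1)).continuous
  have hinv : ContinuousAt (fun x : ℝ => (1 - x ^ 2)⁻¹) 0 :=
    ContinuousAt.inv₀ (by fun_prop) (by norm_num)
  have hc : ContinuousAt (fun x => deriv (deriv y1) x + (1 / 2) * (deriv y1 x) ^ 2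
      + 8 * ((1 - x ^ 2)⁻¹) ^ 2 *
      (6 - 8 * Real.exp (y1 x * (-(1 : ℝ) / 3)) * Real.exp (y2 x * (-(1 : ℝ) / 3))
         + 2 * Real.exp (y1 x * (-(1 : ℝ) / 3)) * Real.exp (y2 x * (-(4 : ℝ) / 3)))) 0 := by
    fun_prop
  have hc2 : ContinuousAt (fun x : ℝ => (5 + 7 * x ^ 2) * (1 - x ^ 2)⁻¹) 0 := by fun_prop
  have l1 := (hc.continuousWithinAt (s := Ioi 0)).tendsto
  have l2 := (hc2.continuousWithinAt (s := Ioi 0)).tendsto.mul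
    (tendsto_div_self_of_smooth (contDiff_deriv_of_smooth h.smooth1) h.der1_0)
  have l3 := l2.congr' (by
    filter_upwards [Ioo_mem_nhdsGT (zero_lt_one (α := ℝ))] with x hx
    have := h.eqE2 x hx
    unfold BergerE2 at this
    simp only [← Real.exp_mul] at this
    show _ = deriv (deriv y1) x + (1 / 2) * (deriv y1 x) ^ 2
      + 8 * ((1 - x ^ 2)⁻¹) ^ 2 *
      (6 - 8 * Real.exp (y1 x * (-(1 : ℝ) / 3)) * Real.exp (y2 x * (-(1 : ℝ) / 3))
         + 2 * Real.exp (y1 x * (-(1 : ℝ) / 3)) * Real.exp (y2 x * (-(4 : ℝ) / 3)))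
    rw [div_eq_mul_inv]
    linear_combination -this)
  have := tendsto_nhds_unique l1 l3
  rw [h.der1_0] at this
  norm_num at this
  simp only [← Real.exp_mul]
  norm_num
  linarith

end BergerBVPSolution

/-- two solutions of the Berger BVP with the same `phi(0) ≠ 1`,
`1/4 < phi(0) < 4`, and the same value `K(0)`, coincide on `[0,1]`. -/
theorem berger_unique_given_K0 (y11 y12 y21 y22 : ℝ → ℝ)
    (hsol1 : BergerBVPSolution y11 y12) (hsol2 : BergerBVPSolution y21 y22)
    (hsame : y12 0 = y22 0)
    (hne : Real.exp (y12 0) ≠ 1)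
    (hlow : 1/4 < Real.exp (y12 0)) (hhigh : Real.exp (y12 0) < 4)
    (hK0 : y11 0 = y21 0) :
    ∀ x ∈ Icc (0:ℝ) 1, y11 x = y21 x ∧ y12 x = y22 x := by
  obtain ⟨σ, hσ, hσ0, hσ4⟩ : ∃ σ : ℝ, (σ = 1 ∨ σ = -1) ∧ 0 ≤ σ * y12 0 ∧
      Real.exp (σ * y12 0) ≤ 4 := by
    rcases le_total 0 (y12 0) with h | h
    · exact ⟨1, Or.inl rfl, by linarith, by simpa using hhigh.le⟩
    · refine ⟨-1, Or.inr rfl, by linarith, ?_⟩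
      rw [neg_one_mul, Real.exp_neg]
      exact inv_le_of_inv_le₀ (by norm_num) (by linarith)
  have hσne : σ ≠ 0 := by rcases hσ with rfl | rfl <;> norm_num
  have ha := hsol1.reduced hσ
  have hb := hsol2.reduced hσ
  have hw0 : σ * y12 0 = σ * y22 0 := by rw [hsame]
  have hG := contDiff_bergerNonlinearity σ
  have hneg : ∀ t < 0, bergerNonlinearity σ t < 0 := fun t => bergerNonlinearity_neg hσ
  have hpos : ∀ t, 0 ≤ t → 0 ≤ bergerNonlinearity σ t := fun t => bergerNonlinearity_nonneg hσ
  have hmono := monotoneOn_bergerNonlinearity hσ hσ4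
  have hy2 : deriv (deriv y11) 0 = deriv (deriv y21) 0 := by
    rw [hsol1.deriv_deriv_y1_zero, hsol2.deriv_deriv_y1_zero, hsame, hK0]
  have hle := ReducedBergerSolution.third_deriv_w_le ha hb hG.continuous hK0 hw0 hy2 hneg hpos hσ0
    hmono
  have hge := ReducedBergerSolution.third_deriv_w_le hb ha hG.continuous hK0.symm hw0.symm hy2.symm
    hneg hpos (hw0 ▸ hσ0) (hw0 ▸ hmono)
  obtain ⟨δ, hδ, hδeq⟩ := ReducedBergerSolution.eq_near_zero ha hb hK0 hw0 hy2 hG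
    (le_antisymm hle hge)
  set c := min δ 1 / 2 with hc
  have hc0 : 0 < c := by positivity
  have hcδ : c < δ := by
    have : min δ 1 ≤ δ := min_le_left _ _
    linarith
  have hc1 : c ≤ 1 := by
    have : min δ 1 ≤ 1 := min_le_right _ _
    linarith
  have hnear : ∀ᶠ x in 𝓝 c, x ∈ Ioo 0 δ := Ioo_mem_nhds hc0 hcδ
  have eq1 := hsol1.analytic1.eqOn_of_preconnected_of_eventuallyEq hsol2.analytic1
    isPreconnected_Ioc ⟨hc0, hc1⟩ (hnear.mono fun x hx => sub_eq_zero.1 (hδeq x hx).1)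
  have eq2 := hsol1.analytic2.eqOn_of_preconnected_of_eventuallyEq hsol2.analytic2
    isPreconnected_Ioc ⟨hc0, hc1⟩
    (hnear.mono fun x hx => mul_left_cancel₀ hσne (sub_eq_zero.1 (hδeq x hx).2))
  intro x hx
  rcases hx.1.eq_or_lt with rfl | h
  · exact ⟨hK0, hsame⟩
  · exact ⟨eq1 ⟨h, hx.2⟩, eq2 ⟨h, hx.2⟩⟩
end

section
/- Let phi0 be a real number with 1/4 < phi0 < 4 and phi0 ≠ 1. Then there exists at most one solution (y1, y2) of the Berger boundary value problem with exp(y2(0)) = phi0: any two solutions (y11, y12) and (y21, y22) with exp(y12(0)) = exp(y22(0)) = phi0 coincide on [0,1]. -/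
open Real Set

/-- The square root of the coefficient of the horizontal part of the metric. -/
noncomputable def bergerRadius (y1 y2 : ℝ → ℝ) (x : ℝ) : ℝ :=
  (1 - x^2) / (2 * x) * Real.exp ((y1 x + y2 x) / 6)

/-- The logarithmic derivative of `bergerRadius y1 y2 ^ 2` with respect to `-log x`. -/
noncomputable def bergerAlpha (y1 y2 : ℝ → ℝ) (x : ℝ) : ℝ :=
  2 * (1 + x^2) / (1 - x^2) - x * (deriv y1 x + deriv y2 x) / 3

/-- The inverse square of `bergerRadius`, which extends smoothly to `x = 0`. -/
noncomputable def bergerInvSq (y1 y2 : ℝ → ℝ) (x : ℝ) : ℝ :=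
  4 * x^2 / (1 - x^2)^2 * Real.exp (-(y1 x + y2 x) / 3)

/-- The value of `1 / phi` as a function of the radius, given its boundary value `u`. -/
noncomputable def bergerProfile (u l : ℝ) : ℝ :=
  u * ((√(l^2 + u) + √u)^2 + 4 * (1 - u)) / (√(l^2 + u) + √u)^2

/-- The speed of the radius with respect to `-log x`. -/
noncomputable def bergerSpeed (u l : ℝ) : ℝ :=
  √(bergerProfile u l * (l^2 / u + 1))

lemma eq_of_hasDerivAt_zero {f : ℝ → ℝ} {a b : ℝ} (hab : a < b)
    (hc : ContinuousOn f (Icc a b)) (hd : ∀ x ∈ Ioo a b, HasDerivAt f 0 x) : f a = f b := by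
  obtain ⟨c, -, hc⟩ := exists_hasDerivAt_eq_slope f (fun _ => 0) hab hc hd
  have : b - a ≠ 0 := by linarith
  field_simp at hc
  linarith

lemma bergerProfile_pos {u : ℝ} (hu : 0 < u) (l : ℝ) : 0 < bergerProfile u l := by
  have hN : 0 < √u := Real.sqrt_pos.2 hu
  have hNR : √u ≤ √(l^2 + u) := Real.sqrt_le_sqrt (by nlinarith [sq_nonneg l])
  have hNsq : √u ^ 2 = u := Real.sq_sqrt hu.le
  have h : 0 < (√(l^2 + u) + √u)^2 + 4 * (1 - u) := by nlinarith
  unfold bergerProfile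
  positivity

lemma bergerSpeed_pos {u : ℝ} (hu : 0 < u) (l : ℝ) : 0 < bergerSpeed u l :=
  Real.sqrt_pos.2 (mul_pos (bergerProfile_pos hu l) (by positivity))

lemma continuous_bergerSpeed {u : ℝ} (hu : 0 < u) : Continuous (bergerSpeed u) := by
  have hN : 0 < √u := Real.sqrt_pos.2 hu
  unfold bergerSpeed bergerProfile
  refine Real.continuous_sqrt.comp (Continuous.mul (Continuous.div ?_ ?_ ?_) ?_)
  · fun_prop
  · fun_prop
  · intro l
    positivity
  · fun_prop

lemma hasDerivAt_integral_inv_bergerSpeed {u : ℝ} (hu : 0 < u) (l : ℝ) :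
    HasDerivAt (fun t => ∫ s in (0:ℝ)..t, (bergerSpeed u s)⁻¹) (bergerSpeed u l)⁻¹ l := by
  have hc : Continuous fun s => (bergerSpeed u s)⁻¹ :=
    (continuous_bergerSpeed hu).inv₀ fun s => (bergerSpeed_pos hu s).ne'
  exact intervalIntegral.integral_hasDerivAt_right (hc.intervalIntegrable _ _)
    (hc.stronglyMeasurableAtFilter _ _) hc.continuousAt

lemma strictMono_integral_inv_bergerSpeed {u : ℝ} (hu : 0 < u) :
    StrictMono fun t => ∫ s in (0:ℝ)..t, (bergerSpeed u s)⁻¹ := by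
  refine strictMono_of_deriv_pos fun l => ?_
  rw [(hasDerivAt_integral_inv_bergerSpeed hu l).deriv]
  exact inv_pos.2 (bergerSpeed_pos hu l)

lemma exp_rpow_mul_exp_rpow (a b s t : ℝ) :
    Real.exp a ^ s * Real.exp b ^ t = Real.exp (a * s + b * t) := by
  rw [← Real.exp_mul, ← Real.exp_mul, ← Real.exp_add]

namespace BergerBVPSolution

variable {y1 y2 : ℝ → ℝ}

lemma hasDerivAt1 (h : BergerBVPSolution y1 y2) (x : ℝ) : HasDerivAt y1 (deriv y1 x) x :=
  (h.smooth1.differentiable (by simp) x).hasDerivAt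

lemma hasDerivAt2 (h : BergerBVPSolution y1 y2) (x : ℝ) : HasDerivAt y2 (deriv y2 x) x :=
  (h.smooth2.differentiable (by simp) x).hasDerivAt

lemma hasDerivAt_deriv1 (h : BergerBVPSolution y1 y2) (x : ℝ) :
    HasDerivAt (deriv y1) (deriv (deriv y1) x) x :=
  (((contDiff_infty_iff_deriv.1 h.smooth1).2).differentiable (by simp) x).hasDerivAt

lemma hasDerivAt_deriv2 (h : BergerBVPSolution y1 y2) (x : ℝ) :
    HasDerivAt (deriv y2) (deriv (deriv y2) x) x :=
  (((contDiff_infty_iff_deriv.1 h.smooth2).2).differentiable (by simp) x).hasDerivAt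

lemma continuous1 (h : BergerBVPSolution y1 y2) : Continuous y1 := h.smooth1.continuous

lemma continuous2 (h : BergerBVPSolution y1 y2) : Continuous y2 := h.smooth2.continuous

lemma continuous_deriv1 (h : BergerBVPSolution y1 y2) : Continuous (deriv y1) :=
  (contDiff_infty_iff_deriv.1 h.smooth1).2.continuous

lemma continuous_deriv2 (h : BergerBVPSolution y1 y2) : Continuous (deriv y2) :=
  (contDiff_infty_iff_deriv.1 h.smooth2).2.continuous

lemma e2_eq (h : BergerBVPSolution y1 y2) {x : ℝ} (hx : x ∈ Ioo (0:ℝ) 1) :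
    deriv (deriv y1) x + (1/2) * (deriv y1 x)^2
      - x⁻¹ * (5 + 7*x^2) * (1 - x^2)⁻¹ * deriv y1 x
      + 8 * ((1 - x^2)⁻¹)^2 * (6 - 8 * Real.exp (-(y1 x + y2 x) / 3)
        + 2 * Real.exp (-(y1 x + y2 x) / 3) * Real.exp (-y2 x)) = 0 := by
  have e := h.eqE2 x hx
  unfold BergerE2 at e
  have h1 : Real.exp (y1 x) ^ (-(1:ℝ)/3) * Real.exp (y2 x) ^ (-(1:ℝ)/3)
      = Real.exp (-(y1 x + y2 x) / 3) := by
    rw [exp_rpow_mul_exp_rpow]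
    ring_nf
  have h2 : Real.exp (y1 x) ^ (-(1:ℝ)/3) * Real.exp (y2 x) ^ (-(4:ℝ)/3)
      = Real.exp (-(y1 x + y2 x) / 3) * Real.exp (-y2 x) := by
    rw [exp_rpow_mul_exp_rpow, ← Real.exp_add]
    ring_nf
  linear_combination e + 64 * ((1 - x^2)⁻¹)^2 * h1 - 16 * ((1 - x^2)⁻¹)^2 * h2

lemma e3_eq (h : BergerBVPSolution y1 y2) {x : ℝ} (hx : x ∈ Ioo (0:ℝ) 1) :
    deriv (deriv y2) x + (1/2) * deriv y1 x * deriv y2 x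
      - 2 * x⁻¹ * (1 + 2*x^2) * (1 - x^2)⁻¹ * deriv y2 x
      + 32 * ((1 - x^2)⁻¹)^2 * Real.exp (-(y1 x + y2 x) / 3) * (Real.exp (-y2 x) - 1) = 0 := by
  have e := h.eqE3 x hx
  unfold BergerE3 at e
  rw [mul_assoc (32 * _), exp_rpow_mul_exp_rpow, ← Real.exp_neg] at e
  convert e using 5
  ring_nf

/-- The Hamiltonian constraint. -/
lemma constraint (h : BergerBVPSolution y1 y2) {x : ℝ} (hx : x ∈ Ioo (0:ℝ) 1) :
    3 * bergerAlpha y1 y2 x ^ 2 + 2 * bergerAlpha y1 y2 x * (x * deriv y2 x)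
      = 12 + (16 - 4 * Real.exp (-y2 x)) * bergerInvSq y1 y2 x := by
  have e1 := h.eqE1 x hx
  have e2 := h.e2_eq hx
  unfold BergerE1 at e1
  unfold bergerAlpha bergerInvSq
  have hx0 : x ≠ 0 := hx.1.ne'
  have hx1 : 1 - x^2 ≠ 0 := by nlinarith [hx.1, hx.2]
  generalize Real.exp (-(y1 x + y2 x) / 3) = e at *
  generalize Real.exp (-y2 x) = u at *
  generalize deriv (deriv y1) x = c at *
  generalize deriv y1 x = a at *
  generalize deriv y2 x = b at *
  linear_combination (norm := (field_simp; ring)) x^2 * e2 - x^2 * e1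

lemma hasDerivAt_bergerAlpha (h : BergerBVPSolution y1 y2) {x : ℝ} (hx : x ∈ Ioo (0:ℝ) 1) :
    HasDerivAt (bergerAlpha y1 y2)
      ((2 * Real.exp (-y2 x) * bergerInvSq y1 y2 x
        - bergerAlpha y1 y2 x * (x * deriv y2 x) / 2) / x) x := by
  have hx0 : x ≠ 0 := hx.1.ne'
  have hx1 : 1 - x^2 ≠ 0 := by nlinarith [hx.1, hx.2]
  have hsq := (hasDerivAt_id' x).pow 2
  have hd := (((hsq.const_add 1).const_mul 2).div (hsq.const_sub 1) hx1).sub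
    (((hasDerivAt_id' x).mul ((h.hasDerivAt_deriv1 x).add (h.hasDerivAt_deriv2 x))).div_const 3)
  refine hd.congr_deriv ?_
  have e1 := h.eqE1 x hx
  have e2 := h.e2_eq hx
  have e3 := h.e3_eq hx
  unfold BergerE1 at e1
  unfold bergerAlpha bergerInvSq
  simp only [Pi.add_apply, Pi.pow_apply]
  generalize Real.exp (-(y1 x + y2 x) / 3) = e at *
  generalize Real.exp (-y2 x) = u at *
  generalize deriv (deriv y1) x = c at *
  generalize deriv (deriv y2) x = d at *
  generalize deriv y1 x = a at *
  generalize deriv y2 x = b at *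
  linear_combination (norm := (field_simp; ring))
    -(x / 3) * (e1 + e3) + x / 6 * (e2 - e1)

lemma bergerRadius_pos {x : ℝ} (hx : x ∈ Ioo (0:ℝ) 1) : 0 < bergerRadius y1 y2 x := by
  have h1 : 0 < 1 - x^2 := by nlinarith [hx.1, hx.2]
  have h0 := hx.1
  unfold bergerRadius
  positivity

lemma bergerInvSq_mul {x : ℝ} (hx : x ∈ Ioo (0:ℝ) 1) :
    bergerInvSq y1 y2 x * bergerRadius y1 y2 x ^ 2 = 1 := by
  have hx0 : x ≠ 0 := hx.1.ne'
  have hx1 : 1 - x^2 ≠ 0 := by nlinarith [hx.1, hx.2]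
  have he : Real.exp (-(y1 x + y2 x) / 3) * Real.exp ((y1 x + y2 x) / 6) ^ 2 = 1 := by
    rw [← Real.exp_nat_mul, ← Real.exp_add, Real.exp_eq_one_iff]
    push_cast
    ring
  unfold bergerInvSq bergerRadius
  generalize Real.exp (-(y1 x + y2 x) / 3) = e at *
  generalize Real.exp ((y1 x + y2 x) / 6) = f at *
  field_simp
  linear_combination 4 * he

lemma hasDerivAt_bergerRadius (h : BergerBVPSolution y1 y2) {x : ℝ} (hx : x ∈ Ioo (0:ℝ) 1) :
    HasDerivAt (bergerRadius y1 y2)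
      (-(bergerAlpha y1 y2 x * bergerRadius y1 y2 x / 2) / x) x := by
  have hx0 : x ≠ 0 := hx.1.ne'
  have hx1 : 1 - x^2 ≠ 0 := by nlinarith [hx.1, hx.2]
  have hd := ((((hasDerivAt_id' x).pow 2).const_sub 1).div
    ((hasDerivAt_id' x).const_mul 2) (by simpa using hx0)).mul
    (((h.hasDerivAt1 x).add (h.hasDerivAt2 x)).div_const 6).exp
  refine hd.congr_deriv ?_
  unfold bergerAlpha bergerRadius
  simp only [Pi.add_apply, Pi.pow_apply, Pi.div_apply]
  field_simp
  ring

lemma hasDerivAt_bergerInvSq (h : BergerBVPSolution y1 y2) {x : ℝ} (hx : x ∈ Ioo (0:ℝ) 1) :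
    HasDerivAt (bergerInvSq y1 y2) (bergerAlpha y1 y2 x * bergerInvSq y1 y2 x / x) x := by
  have hx0 : x ≠ 0 := hx.1.ne'
  have hx1 : 1 - x^2 ≠ 0 := by nlinarith [hx.1, hx.2]
  have hsq := (hasDerivAt_id' x).pow 2
  have hd := ((hsq.const_mul 4).div ((hsq.const_sub 1).pow 2) (pow_ne_zero 2 hx1)).mul
    (((h.hasDerivAt1 x).add (h.hasDerivAt2 x)).neg.div_const 3).exp
  refine hd.congr_deriv ?_
  unfold bergerAlpha bergerInvSq
  simp only [Pi.add_apply, Pi.pow_apply, Pi.div_apply, Pi.neg_apply]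
  field_simp
  ring

lemma continuousOn_bergerAlpha (h : BergerBVPSolution y1 y2) :
    ContinuousOn (bergerAlpha y1 y2) (Ico 0 1) := by
  have h1 := h.continuous_deriv1
  have h2 := h.continuous_deriv2
  unfold bergerAlpha
  refine ContinuousOn.sub (ContinuousOn.div (by fun_prop) (by fun_prop) fun x hx => ?_)
    (by fun_prop)
  nlinarith [hx.1, hx.2]

lemma continuousOn_bergerInvSq (h : BergerBVPSolution y1 y2) :
    ContinuousOn (bergerInvSq y1 y2) (Ico 0 1) := by
  have h1 := h.continuous1
  have h2 := h.continuous2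
  unfold bergerInvSq
  refine ContinuousOn.mul (ContinuousOn.div (by fun_prop) (by fun_prop) fun x hx => ?_)
    (by fun_prop)
  have : 1 - x^2 ≠ 0 := by nlinarith [hx.1, hx.2]
  positivity

lemma continuousOn_bergerRadius (h : BergerBVPSolution y1 y2) :
    ContinuousOn (bergerRadius y1 y2) (Ioi 0) := by
  have h1 := h.continuous1
  have h2 := h.continuous2
  unfold bergerRadius
  refine ContinuousOn.mul (ContinuousOn.div (by fun_prop) (by fun_prop) fun x hx => ?_)
    (by fun_prop)
  have : x ≠ 0 := ne_of_gt hx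
  positivity

/-- The first integral of the system, evaluated at `x = 0`. -/
lemma first_integral (h : BergerBVPSolution y1 y2) {x : ℝ} (hx : x ∈ Ioo (0:ℝ) 1) :
    bergerAlpha y1 y2 x ^ 2 * Real.exp (y2 x) / 4 - bergerInvSq y1 y2 x = Real.exp (y2 0) := by
  have hsub : Icc 0 x ⊆ Ico (0:ℝ) 1 := fun y hy => ⟨hy.1, hy.2.trans_lt hx.2⟩
  have key := eq_of_hasDerivAt_zero
    (f := fun y => bergerAlpha y1 y2 y ^ 2 * Real.exp (y2 y) / 4 - bergerInvSq y1 y2 y)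
    hx.1 ?_ ?_
  · rw [← key]
    simp [bergerAlpha, bergerInvSq]
    ring
  · have hα := h.continuousOn_bergerAlpha.mono hsub
    have hI := h.continuousOn_bergerInvSq.mono hsub
    have h2 := h.continuous2
    fun_prop
  · intro y hy
    have hy' : y ∈ Ioo (0:ℝ) 1 := ⟨hy.1, hy.2.trans hx.2⟩
    have hy0 : y ≠ 0 := hy.1.ne'
    refine ((((h.hasDerivAt_bergerAlpha hy').pow 2).mul (h.hasDerivAt2 y).exp).div_const 4
      |>.sub (h.hasDerivAt_bergerInvSq hy')).congr_deriv ?_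
    have he : Real.exp (-y2 y) * Real.exp (y2 y) = 1 := by
      rw [← Real.exp_add]
      simp
    simp only [Pi.pow_apply]
    linear_combination (norm := (field_simp; ring))
      bergerAlpha y1 y2 y * bergerInvSq y1 y2 y / y * he

lemma bergerAlpha_sq (h : BergerBVPSolution y1 y2) {x : ℝ} (hx : x ∈ Ioo (0:ℝ) 1) :
    bergerAlpha y1 y2 x ^ 2
      = 4 * Real.exp (-y2 x) * (Real.exp (y2 0) + bergerInvSq y1 y2 x) := by
  have he : Real.exp (-y2 x) * Real.exp (y2 x) = 1 := by
    rw [← Real.exp_add]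
    simp
  linear_combination 4 * Real.exp (-y2 x) * h.first_integral hx - bergerAlpha y1 y2 x ^ 2 * he

lemma bergerAlpha_pos (h : BergerBVPSolution y1 y2) {x : ℝ} (hx : x ∈ Ioo (0:ℝ) 1) :
    0 < bergerAlpha y1 y2 x := by
  by_contra! hneg
  have hsub : Icc 0 x ⊆ Ico (0:ℝ) 1 := fun y hy => ⟨hy.1, hy.2.trans_lt hx.2⟩
  have h0 : bergerAlpha y1 y2 0 = 2 := by simp [bergerAlpha]
  obtain ⟨z, hz, hz0⟩ := intermediate_value_Icc' hx.1.le (h.continuousOn_bergerAlpha.mono hsub)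
    (show (0:ℝ) ∈ Icc (bergerAlpha y1 y2 x) (bergerAlpha y1 y2 0) from
      ⟨hneg, by rw [h0]; norm_num⟩)
  rcases hz.1.eq_or_lt with rfl | hpos
  · norm_num [h0] at hz0
  · have hsq := h.bergerAlpha_sq ⟨hpos, hz.2.trans_lt hx.2⟩
    have hI : 0 ≤ bergerInvSq y1 y2 z := by
      unfold bergerInvSq
      positivity
    have : 0 < 4 * Real.exp (-y2 z) * (Real.exp (y2 0) + bergerInvSq y1 y2 z) := by positivity
    rw [hz0] at hsq
    linarith

/-- The mass-type first integral, evaluated at `x = 1`. -/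
lemma mass_integral (h : BergerBVPSolution y1 y2) {u : ℝ} (hu : u * Real.exp (y2 0) = 1)
    {x : ℝ} (hx : x ∈ Ioo (0:ℝ) 1) :
    (4 * √(bergerRadius y1 y2 x ^ 2 + u)^2 + 4 * u + √(bergerRadius y1 y2 x ^ 2 + u)^4
      - 6 * u * √(bergerRadius y1 y2 x ^ 2 + u)^2 - 3 * u^2
      - Real.exp (-y2 x) * bergerRadius y1 y2 x ^ 4 / u) / √(bergerRadius y1 y2 x ^ 2 + u)
      = 8 * √u * (1 - u) := by
  have hu0 : 0 < u := pos_of_mul_pos_left (by rw [hu]; norm_num) (Real.exp_pos _).le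
  have hpos : ∀ l : ℝ, 0 < l^2 + u := fun l => by positivity
  have key := eq_of_hasDerivAt_zero
    (f := fun x => (4 * √(bergerRadius y1 y2 x ^ 2 + u)^2 + 4 * u
      + √(bergerRadius y1 y2 x ^ 2 + u)^4
      - 6 * u * √(bergerRadius y1 y2 x ^ 2 + u)^2 - 3 * u^2
      - Real.exp (-y2 x) * bergerRadius y1 y2 x ^ 4 / u) / √(bergerRadius y1 y2 x ^ 2 + u))
    hx.2 ?_ ?_
  · rw [key]
    have hL : bergerRadius y1 y2 1 = 0 := by simp [bergerRadius]
    have hN : 0 < √u := Real.sqrt_pos.2 hu0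
    have hNsq : √u ^ 2 = u := Real.sq_sqrt hu0.le
    rw [hL]
    norm_num
    rw [div_eq_iff hN.ne', show √u ^ 4 = (√u^2)^2 by ring, hNsq]
    linear_combination (-8 * (1 - u)) * hNsq
  · have hL : ContinuousOn (bergerRadius y1 y2) (Icc x 1) :=
      h.continuousOn_bergerRadius.mono fun y hy => hx.1.trans_le hy.1
    have h2 := h.continuous2
    have hR : ContinuousOn (fun y => √(bergerRadius y1 y2 y ^ 2 + u)) (Icc x 1) := by fun_prop
    refine ContinuousOn.div (by fun_prop) hR fun y _ => (Real.sqrt_pos.2 (hpos _)).ne'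
  · intro y hy
    have hy' : y ∈ Ioo (0:ℝ) 1 := ⟨hx.1.trans hy.1, hy.2⟩
    have hy0 : y ≠ 0 := hy'.1.ne'
    have hL := h.hasDerivAt_bergerRadius hy'
    have hR := ((hL.pow 2).add_const u).sqrt (hpos _).ne'
    have hRpos := Real.sqrt_pos.2 (hpos (bergerRadius y1 y2 y))
    refine (((((((hR.pow 2).const_mul 4).add_const (4 * u)).add (hR.pow 4)).sub
      ((hR.pow 2).const_mul (6 * u))).sub_const (3 * u^2)).sub
      (((h.hasDerivAt2 y).neg.exp.mul (hL.pow 4)).div_const u)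
      |>.div hR hRpos.ne').congr_deriv ?_
    have hc := h.constraint hy'
    have hs := h.bergerAlpha_sq hy'
    have hI := bergerInvSq_mul (y1 := y1) (y2 := y2) hy'
    have hα := (h.bergerAlpha_pos hy').ne'
    have hLpos := (bergerRadius_pos (y1 := y1) (y2 := y2) hy').ne'
    have hRsq : √(bergerRadius y1 y2 y ^ 2 + u) ^ 2 = bergerRadius y1 y2 y ^ 2 + u :=
      Real.sq_sqrt (hpos _).le
    simp only [Pi.pow_apply, Pi.mul_apply, Pi.add_apply, Pi.sub_apply, Pi.neg_apply]
    generalize √(bergerRadius y1 y2 y ^ 2 + u) = R at *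
    generalize bergerRadius y1 y2 y = L at *
    generalize bergerInvSq y1 y2 y = I at *
    generalize bergerAlpha y1 y2 y = α at *
    generalize Real.exp (-y2 y) = v at *
    generalize deriv y2 y = b at *
    generalize Real.exp (y2 0) = w at *
    have hw : w = 1 / u := by
      field_simp
      linarith
    have hI' : I = 1 / L^2 := by
      field_simp
      linarith
    subst hw hI'
    have hX : (L^2 + u) * ((8 + 4 * (L^2 + u) - 12 * u) * (-α * L^2 / 2)
        + (b * y + 2 * α) * v * L^4 / u)
        + (4 * (L^2 + u) + 4 * u + (L^2 + u)^2 - 6 * u * (L^2 + u) - 3 * u^2 - v * L^4 / u)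
          * (α * L^2 / 2) = 0 := by
      refine (mul_eq_zero_iff_left hα).1 ?_
      linear_combination (norm := (field_simp; ring)) (v * (L^2 + u) * L^4 / (2 * u)) * hc
        + ((L^2 + u) * (-(8 + 4 * (L^2 + u) - 12 * u) * L^2 / 2 + 2 * v * L^4 / u)
          + (4 * (L^2 + u) + 4 * u + (L^2 + u)^2 - 6 * u * (L^2 + u) - 3 * u^2
            - v * L^4 / u) * L^2 / 2 - 3 * v * (L^2 + u) * L^4 / (2 * u)) * hs
    obtain rfl : u = R^2 - L^2 := by linarith
    have hu1 := hu0.ne'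
    rw [div_eq_zero_iff]
    left
    linear_combination (norm := (field_simp; ring)) 1 / (y * R) * hX

/-- The function `1 / phi` is a function of the radius only. -/
lemma exp_neg_eq_bergerProfile (h : BergerBVPSolution y1 y2) {u : ℝ}
    (hu : u * Real.exp (y2 0) = 1) {x : ℝ} (hx : x ∈ Ioo (0:ℝ) 1) :
    Real.exp (-y2 x) = bergerProfile u (bergerRadius y1 y2 x) := by
  have hu0 : 0 < u := pos_of_mul_pos_left (by rw [hu]; norm_num) (Real.exp_pos _).le
  have hm := h.mass_integral hu hx
  have hL := bergerRadius_pos (y1 := y1) (y2 := y2) hx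
  unfold bergerProfile
  have hRsq : √(bergerRadius y1 y2 x ^ 2 + u) ^ 2 = bergerRadius y1 y2 x ^ 2 + u :=
    Real.sq_sqrt (by positivity)
  have hRpos : 0 < √(bergerRadius y1 y2 x ^ 2 + u) := Real.sqrt_pos.2 (by positivity)
  have hNsq : √u ^ 2 = u := Real.sq_sqrt hu0.le
  have hNpos : 0 < √u := Real.sqrt_pos.2 hu0
  generalize √(bergerRadius y1 y2 x ^ 2 + u) = R at *
  generalize bergerRadius y1 y2 x = L at *
  generalize √u = N at *
  generalize Real.exp (-y2 x) = v at *
  subst hNsq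
  have hRN : R - N ≠ 0 := by
    intro h0
    have : R = N := by linarith
    subst this
    nlinarith
  rw [eq_div_iff (by positivity)]
  refine mul_left_cancel₀ (pow_ne_zero 2 hRN) ?_
  have hL4 : L^4 = (R^2 - N^2)^2 := by
    rw [hRsq]
    ring
  rw [hL4] at hm
  field_simp at hm
  linear_combination -hm

lemma hasDerivAt_bergerRadius_speed (h : BergerBVPSolution y1 y2) {u : ℝ}
    (hu : u * Real.exp (y2 0) = 1) {x : ℝ} (hx : x ∈ Ioo (0:ℝ) 1) :
    HasDerivAt (bergerRadius y1 y2) (-bergerSpeed u (bergerRadius y1 y2 x) / x) x := by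
  have hu0 : 0 < u := pos_of_mul_pos_left (by rw [hu]; norm_num) (Real.exp_pos _).le
  have hL := bergerRadius_pos (y1 := y1) (y2 := y2) hx
  have hα := h.bergerAlpha_pos hx
  refine (h.hasDerivAt_bergerRadius hx).congr_deriv ?_
  congr 2
  unfold bergerSpeed
  rw [← h.exp_neg_eq_bergerProfile hu hx, eq_comm,
    Real.sqrt_eq_iff_mul_self_eq_of_pos (by positivity)]
  have hs := h.bergerAlpha_sq hx
  have hI := bergerInvSq_mul (y1 := y1) (y2 := y2) hx
  have hw : Real.exp (y2 0) = 1 / u := by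
    field_simp
    linarith
  rw [hw] at hs
  linear_combination bergerRadius y1 y2 x ^ 2 / 4 * hs + Real.exp (-y2 x) * hI

/-- Implicit formula for the radius. -/
lemma integral_inv_bergerSpeed (h : BergerBVPSolution y1 y2) {u : ℝ}
    (hu : u * Real.exp (y2 0) = 1) {x : ℝ} (hx : x ∈ Ioo (0:ℝ) 1) :
    ∫ s in (0:ℝ)..bergerRadius y1 y2 x, (bergerSpeed u s)⁻¹ = -Real.log x := by
  have hu0 : 0 < u := pos_of_mul_pos_left (by rw [hu]; norm_num) (Real.exp_pos _).le
  have key := eq_of_hasDerivAt_zero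
    (f := fun y => (∫ s in (0:ℝ)..bergerRadius y1 y2 y, (bergerSpeed u s)⁻¹) + Real.log y)
    hx.2 ?_ ?_
  · have hL : bergerRadius y1 y2 1 = 0 := by simp [bergerRadius]
    simp only [hL, intervalIntegral.integral_same, Real.log_one, add_zero] at key
    linarith
  · have hL : ContinuousOn (bergerRadius y1 y2) (Icc x 1) :=
      h.continuousOn_bergerRadius.mono fun y hy => hx.1.trans_le hy.1
    have hΨ : Continuous fun t => ∫ s in (0:ℝ)..t, (bergerSpeed u s)⁻¹ :=
      continuous_iff_continuousAt.2 fun l =>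
        (hasDerivAt_integral_inv_bergerSpeed hu0 l).continuousAt
    exact (hΨ.comp_continuousOn hL).add
      (Real.continuousOn_log.mono fun y hy => (hx.1.trans_le hy.1).ne')
  · intro y hy
    have hy' : y ∈ Ioo (0:ℝ) 1 := ⟨hx.1.trans hy.1, hy.2⟩
    have hy0 : y ≠ 0 := hy'.1.ne'
    have hF := (bergerSpeed_pos hu0 (bergerRadius y1 y2 y)).ne'
    refine (((hasDerivAt_integral_inv_bergerSpeed hu0 _).comp y
      (h.hasDerivAt_bergerRadius_speed hu hy')).add (Real.hasDerivAt_log hy0)).congr_deriv ?_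
    field_simp
    ring

lemma eq_of_exp_eq {z1 z2 : ℝ → ℝ} (h : BergerBVPSolution y1 y2) (k : BergerBVPSolution z1 z2)
    (h0 : Real.exp (y2 0) = Real.exp (z2 0)) {x : ℝ} (hx : x ∈ Ioo (0:ℝ) 1) :
    y1 x = z1 x ∧ y2 x = z2 x := by
  have hu : (Real.exp (y2 0))⁻¹ * Real.exp (y2 0) = 1 := inv_mul_cancel₀ (Real.exp_pos _).ne'
  have ku : (Real.exp (y2 0))⁻¹ * Real.exp (z2 0) = 1 := h0 ▸ hu
  have hL : bergerRadius y1 y2 x = bergerRadius z1 z2 x :=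
    (strictMono_integral_inv_bergerSpeed (inv_pos.2 (Real.exp_pos (y2 0)))).injective
      ((h.integral_inv_bergerSpeed hu hx).trans (k.integral_inv_bergerSpeed ku hx).symm)
  have hv : Real.exp (-y2 x) = Real.exp (-z2 x) := by
    rw [h.exp_neg_eq_bergerProfile hu hx, k.exp_neg_eq_bergerProfile ku hx, hL]
  have h2 : y2 x = z2 x := neg_injective (Real.exp_injective hv)
  have hc : (1 - x^2) / (2 * x) ≠ 0 := by
    have hx1 : 1 - x^2 ≠ 0 := by nlinarith [hx.1, hx.2]
    have hx0 : x ≠ 0 := hx.1.ne'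
    positivity
  have hsum := Real.exp_injective (mul_left_cancel₀ hc hL)
  exact ⟨by linarith, h2⟩

end BergerBVPSolution

/-- uniqueness of the solution to the Berger BVP with prescribed
`phi(0) = phi0`, for `1/4 < phi0 < 4`, `phi0 ≠ 1`. -/
theorem berger_bvp_uniqueness (phi0 : ℝ)
    (hlow : 1/4 < phi0) (hhigh : phi0 < 4) (hne : phi0 ≠ 1)
    (y11 y12 y21 y22 : ℝ → ℝ)
    (hsol1 : BergerBVPSolution y11 y12) (hsol2 : BergerBVPSolution y21 y22)
    (hp1 : Real.exp (y12 0) = phi0) (hp2 : Real.exp (y22 0) = phi0) :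
    ∀ x ∈ Icc (0:ℝ) 1, y11 x = y21 x ∧ y12 x = y22 x := by
  have hex : Real.exp (y12 0) = Real.exp (y22 0) := hp1.trans hp2.symm
  have hIoo : ∀ x ∈ Ioo (0:ℝ) 1, y11 x = y21 x ∧ y12 x = y22 x :=
    fun x hx => hsol1.eq_of_exp_eq hsol2 hex hx
  have hcl : closure (Ioo (0:ℝ) 1) = Icc 0 1 := closure_Ioo (by norm_num)
  have h1 : EqOn y11 y21 (closure (Ioo 0 1)) :=
    EqOn.closure (fun x hx => (hIoo x hx).1) hsol1.continuous1 hsol2.continuous1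
  have h2 : EqOn y12 y22 (closure (Ioo 0 1)) :=
    EqOn.closure (fun x hx => (hIoo x hx).2) hsol1.continuous2 hsol2.continuous2
  intro x hx
  rw [← hcl] at hx
  exact ⟨h1 hx, h2 hx⟩
end

section
/- Let (y1, y2) be a solution of the Berger boundary value problem with phi(0) ≠ 1 (where K = exp∘y1, phi = exp∘y2). Then for every x ∈ (0,1) the quantity D(x) := (1−x^2)^2 + (1/36) x^2 (1−x^2)^2 (y2'(x))^2 + (4/3) x^2 K(x)^{-1/3} phi(x)^{-4/3} (4 phi(x) − 1) is nonnegative, and y1'(x) = 6 x^{-1} (1−x^2)^{-1} [ 1 + x^2 − sqrt(D(x)) ]. -/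
open Real Set

/-- A differentiable function that is nonnegative at `0` and has positive derivative at each of its
zeros in `[0, 1)` is nonnegative on `[0, 1]`. -/
lemma nonneg_of_deriv_pos_at_zeros {g g' : ℝ → ℝ} (hg : ∀ x, HasDerivAt g (g' x) x)
    (h0 : 0 ≤ g 0) (hpos : ∀ x ∈ Ico (0:ℝ) 1, g x = 0 → 0 < g' x) :
    ∀ x ∈ Icc (0:ℝ) 1, 0 ≤ g x := fun _ hx =>
  image_le_of_deriv_right_lt_deriv_boundary (f := fun _ => 0) (f' := fun _ => 0)
    continuousOn_const (fun y _ => hasDerivWithinAt_const y _ _) h0 hg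
    (fun y hy h => hpos y hy h.symm) hx

/-- The case `m = 1` is `(1 - x²)` times the logarithmic derivative of the length of the base
directions, and `m = -2` that of the fibre direction, of the Berger spheres with respect to
`-log x`. -/
noncomputable def bergerPrincipal (m : ℝ) (y1 y2 : ℝ → ℝ) (x : ℝ) : ℝ :=
  1 + x^2 - x * (1 - x^2) * (deriv y1 x + m * deriv y2 x) / 6

/-- The derivative of `bergerPrincipal`. -/
noncomputable def bergerPrincipalDeriv (m : ℝ) (y1 y2 : ℝ → ℝ) (x : ℝ) : ℝ :=
  2 * x - ((1 - 3 * x^2) * (deriv y1 x + m * deriv y2 x)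
    + x * (1 - x^2) * (deriv (deriv y1) x + m * deriv (deriv y2) x)) / 6

lemma ContDiff.hasDerivAt_deriv {y : ℝ → ℝ} (hy : ContDiff ℝ (⊤ : ℕ∞) y) (x : ℝ) :
    HasDerivAt (deriv y) (deriv (deriv y) x) x :=
  ((contDiff_infty_iff_deriv.1 hy).2.differentiable (by simp) x).hasDerivAt

lemma hasDerivAt_bergerPrincipal {y1 y2 : ℝ → ℝ} (h1 : ContDiff ℝ (⊤ : ℕ∞) y1)
    (h2 : ContDiff ℝ (⊤ : ℕ∞) y2) (m x : ℝ) :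
    HasDerivAt (bergerPrincipal m y1 y2) (bergerPrincipalDeriv m y1 y2 x) x := by
  have hsq : HasDerivAt (fun x : ℝ => x^2) (2 * x) x := by simpa using hasDerivAt_pow 2 x
  have key := (hsq.const_add 1).sub ((((hasDerivAt_id x).mul (hsq.const_sub 1)).mul
    ((h1.hasDerivAt_deriv x).add ((h2.hasDerivAt_deriv x).const_mul m))).div_const 6)
  refine key.congr_deriv ?_
  simp only [bergerPrincipalDeriv, id, Pi.mul_apply, Pi.add_apply]
  ring

lemma exp_rpow_neg_four_thirds (t : ℝ) :
    Real.exp t ^ (-(4:ℝ)/3) = Real.exp t ^ (-(1:ℝ)/3) * (Real.exp t)⁻¹ := by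
  rw [← Real.rpow_neg_one, ← Real.rpow_add (Real.exp_pos t)]
  norm_num

/-- The Hamiltonian constraint together with the evolution equations of the two principal
curvatures, in polynomial form. -/
lemma BergerBVPSolution.principal_relations {y1 y2 : ℝ → ℝ} (hsol : BergerBVPSolution y1 y2)
    {x : ℝ} (hx : x ∈ Ioo (0:ℝ) 1) :
    ∃ A B : ℝ, 0 < A ∧ 0 < B ∧
      A = Real.exp (y1 x) ^ (-(1:ℝ)/3) * Real.exp (y2 x) ^ (-(1:ℝ)/3) ∧
      B = Real.exp (y1 x) ^ (-(1:ℝ)/3) * Real.exp (y2 x) ^ (-(4:ℝ)/3) ∧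
      B * Real.exp (y2 x) = A ∧
      bergerPrincipal 1 y1 y2 x *
          (2 * bergerPrincipal (-2) y1 y2 x + bergerPrincipal 1 y1 y2 x)
        = 3 * (1 - x^2)^2 + 16 * x^2 * A - 4 * x^2 * B ∧
      x * (1 - x^2) * bergerPrincipalDeriv 1 y1 y2 x
        = bergerPrincipal 1 y1 y2 x *
            (bergerPrincipal (-2) y1 y2 x + 2 * bergerPrincipal 1 y1 y2 x - 2 * x^2)
          - 3 * (1 - x^2)^2 - 16 * x^2 * A + 8 * x^2 * B ∧
      x * (1 - x^2) * bergerPrincipalDeriv (-2) y1 y2 x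
        = bergerPrincipal (-2) y1 y2 x *
            (bergerPrincipal (-2) y1 y2 x + 2 * bergerPrincipal 1 y1 y2 x - 2 * x^2)
          - 3 * (1 - x^2)^2 - 8 * x^2 * B := by
  have hx0 : x ≠ 0 := hx.1.ne'
  have hc : 1 - x^2 ≠ 0 := by nlinarith [hx.1, hx.2]
  have e1 := hsol.eqE1 x hx
  have e2 := hsol.eqE2 x hx
  have e3 := hsol.eqE3 x hx
  have hphi : (Real.exp (y2 x))⁻¹ * Real.exp (y2 x) = 1 := inv_mul_cancel₀ (Real.exp_pos _).ne'
  have hB := exp_rpow_neg_four_thirds (y2 x)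
  refine ⟨_, _, by positivity, by positivity, rfl, rfl, ?_, ?_, ?_, ?_⟩
  · rw [hB]
    linear_combination (Real.exp (y1 x) ^ (-(1:ℝ)/3) * Real.exp (y2 x) ^ (-(1:ℝ)/3)) * hphi
  all_goals
    simp only [BergerE1, BergerE2, BergerE3, hB] at e1 e2 e3
    simp only [bergerPrincipal, bergerPrincipalDeriv, hB]
    generalize Real.exp (y1 x) ^ (-(1:ℝ)/3) = k at *
    generalize Real.exp (y2 x) ^ (-(1:ℝ)/3) = f at *
    generalize (Real.exp (y2 x))⁻¹ = i at *
    generalize deriv (deriv y1) x = p' at *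
    generalize deriv (deriv y2) x = q' at *
    generalize deriv y1 x = p at *
    generalize deriv y2 x = q at *
    generalize hC : 1 - x^2 = c at *
    field_simp at e1 e2 e3
    subst hC
  · linear_combination x / 8 * e2 - x * (1 - x^2) / 72 * e1
  · linear_combination -(x / 12) * (e2 + e3)
  · linear_combination -(x / 12) * (e2 - 2 * e3)

lemma BergerBVPSolution.bergerPrincipal_base_nonneg {y1 y2 : ℝ → ℝ}
    (hsol : BergerBVPSolution y1 y2) :
    ∀ x ∈ Icc (0:ℝ) 1, 0 ≤ bergerPrincipal 1 y1 y2 x := by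
  refine nonneg_of_deriv_pos_at_zeros (hasDerivAt_bergerPrincipal hsol.smooth1 hsol.smooth2 1)
    (by simp [bergerPrincipal]) fun x hx hzero => ?_
  rcases hx.1.eq_or_lt with rfl | h0
  · simp [bergerPrincipal] at hzero
  obtain ⟨A, B, hA, -, -, -, -, hcon, hder, -⟩ := hsol.principal_relations ⟨h0, hx.2⟩
  rw [hzero] at hcon hder
  have hc : 0 < 1 - x^2 := by nlinarith [hx.2]
  refine pos_of_mul_pos_right (a := x * (1 - x^2)) ?_ (by positivity)
  have : x * (1 - x^2) * bergerPrincipalDeriv 1 y1 y2 x = 3 * (1 - x^2)^2 + 16 * x^2 * A := by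
    linear_combination hder + 2 * hcon
  rw [this]
  positivity

lemma BergerBVPSolution.bergerPrincipal_fibre_nonneg {y1 y2 : ℝ → ℝ}
    (hsol : BergerBVPSolution y1 y2) :
    ∀ x ∈ Icc (0:ℝ) 1, 0 ≤ bergerPrincipal (-2) y1 y2 x := by
  have hder (x : ℝ) : HasDerivAt (fun t => bergerPrincipal (-2) y1 y2 (1 - t))
      (-bergerPrincipalDeriv (-2) y1 y2 (1 - x)) x :=
    (hasDerivAt_bergerPrincipal hsol.smooth1 hsol.smooth2 (-2) (1 - x)).comp_const_sub 1 x
  have key := nonneg_of_deriv_pos_at_zeros hder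
    (by norm_num [bergerPrincipal]) fun x hx hzero => ?_
  · intro x hx
    simpa using key (1 - x) ⟨by linarith [hx.2], by linarith [hx.1]⟩
  rcases hx.1.eq_or_lt with rfl | h0
  · norm_num [bergerPrincipal] at hzero
  generalize ht : 1 - x = t at *
  have ht0 : 0 < t := by linarith [hx.2]
  have ht1 : t < 1 := by linarith
  obtain ⟨A, B, -, hB, -, -, -, -, -, hder⟩ := hsol.principal_relations ⟨ht0, ht1⟩
  rw [hzero] at hder
  have hc : 0 < 1 - t^2 := by nlinarith
  refine pos_of_mul_pos_right (a := t * (1 - t^2)) ?_ (by positivity)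
  have : t * (1 - t^2) * -bergerPrincipalDeriv (-2) y1 y2 t
      = 3 * (1 - t^2)^2 + 8 * t^2 * B := by
    linear_combination -hder
  rw [this]
  positivity

/-- the first-order expression of `y1'` for a solution of the Berger BVP
with `phi(0) ≠ 1`: with
`D(x) = (1−x²)² + (1/36)x²(1−x²)²(y2')² + (4/3)x² K^{-1/3} phi^{-4/3}(4phi − 1)`,
one has `D ≥ 0` and `y1' = 6x⁻¹(1−x²)⁻¹(1 + x² − √D)` on `(0,1)`. -/
theorem berger_y1_deriv_formula (y1 y2 : ℝ → ℝ)
    (hsol : BergerBVPSolution y1 y2)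
    (hphi0 : Real.exp (y2 0) ≠ 1) :
    ∀ x ∈ Ioo (0:ℝ) 1,
      0 ≤ (1 - x^2)^2 + (1/36) * x^2 * (1 - x^2)^2 * (deriv y2 x)^2
        + (4/3) * x^2 * Real.exp (y1 x) ^ (-(1:ℝ)/3) * Real.exp (y2 x) ^ (-(4:ℝ)/3)
          * (4 * Real.exp (y2 x) - 1) ∧
      deriv y1 x = 6 * x⁻¹ * (1 - x^2)⁻¹ *
        (1 + x^2 - Real.sqrt ((1 - x^2)^2 + (1/36) * x^2 * (1 - x^2)^2 * (deriv y2 x)^2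
          + (4/3) * x^2 * Real.exp (y1 x) ^ (-(1:ℝ)/3) * Real.exp (y2 x) ^ (-(4:ℝ)/3)
            * (4 * Real.exp (y2 x) - 1))) := by
  intro x hx
  have hx0 : x ≠ 0 := hx.1.ne'
  have hc : 1 - x^2 ≠ 0 := by nlinarith [hx.1, hx.2]
  obtain ⟨A, B, -, -, hA, hB, hAB, hcon, -, -⟩ := hsol.principal_relations hx
  have hb := hsol.bergerPrincipal_base_nonneg x (Ioo_subset_Icc_self hx)
  have ha := hsol.bergerPrincipal_fibre_nonneg x (Ioo_subset_Icc_self hx)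
  have hW : 0 ≤ 1 + x^2 - x * (1 - x^2) * deriv y1 x / 6 := by
    simp only [bergerPrincipal] at ha hb
    linarith
  have hD : (1 - x^2)^2 + (1/36) * x^2 * (1 - x^2)^2 * (deriv y2 x)^2
        + (4/3) * x^2 * Real.exp (y1 x) ^ (-(1:ℝ)/3) * Real.exp (y2 x) ^ (-(4:ℝ)/3)
          * (4 * Real.exp (y2 x) - 1)
      = (1 + x^2 - x * (1 - x^2) * deriv y1 x / 6)^2 := by
    simp only [bergerPrincipal] at hcon
    linear_combination (-1/3) * hcon + (16/3) * x^2 * hAB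
      - (4/3) * x^2 * (4 * Real.exp (y2 x) - 1) * hB
  rw [hD, Real.sqrt_sq hW]
  refine ⟨sq_nonneg _, ?_⟩
  field_simp
  ring
end
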